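/- arXiv:2412.11117 — 4 statements merged into one kernel-verified Lean document; each statement's English description precedes it below -/
import Mathlib

section
/- There exists a constant C > 0 such that for every Schwartz function f : ℝ³ → ℝ one has ‖f‖_{L^∞} ≤ C ‖∇f‖_{L²}^{1/2} ‖∇²f‖_{L²}^{1/2}. -/
open MeasureTheory
open scoped NNReal ENNReal

namespace LinftyAux

open scoped SchwartzMap FourierTransform LineDeriv

abbrev V := EuclideanSpace ℝ (Fin 3)

lemma weight (s : ℝ) (hs : 0 < s) :
    Integrable (fun x : V => (s * ‖x‖ ^ 2 + ‖x‖ ^ 4 / s)⁻¹) ∧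
    ∫ x : V, (s * ‖x‖ ^ 2 + ‖x‖ ^ 4 / s)⁻¹ =
      3 * (volume.real (Metric.ball (0 : V) 1) * (Real.pi / 2)) := by
  have hd : Module.finrank ℝ V = 3 := by simp
  have key : ∀ y ∈ Set.Ioi (0 : ℝ), y ^ (Module.finrank ℝ V - 1) • (s * y ^ 2 + y ^ 4 / s)⁻¹
      = s⁻¹ * (1 + (s⁻¹ * y) ^ 2)⁻¹ := by
    intro y hy
    have hy : 0 < y := hy
    rw [hd]
    simp only [smul_eq_mul, Nat.add_one_sub_one]
    have : 0 < s ^ 2 + y ^ 2 := by positivity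
    field_simp
  constructor
  · rw [integrable_fun_norm_addHaar (volume : Measure V) (f := fun y => (s * y ^ 2 + y ^ 4 / s)⁻¹)]
    rw [integrableOn_congr_fun key measurableSet_Ioi]
    exact ((integrable_inv_one_add_sq.comp_mul_left' (inv_ne_zero hs.ne')).const_mul _).integrableOn
  · rw [integral_fun_norm_addHaar (volume : Measure V) (fun y => (s * y ^ 2 + y ^ 4 / s)⁻¹),
      setIntegral_congr_fun measurableSet_Ioi key, integral_const_mul]
    have := integral_comp_mul_left_Ioi' (fun y : ℝ => (1 + y ^ 2)⁻¹) 0 (inv_pos.2 hs)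
    rw [smul_eq_mul] at this
    rw [this, mul_zero, integral_Ioi_inv_one_add_sq, hd]
    simp

lemma four (g : 𝓢(V, ℂ)) (i : Fin 3) (ξ : V) :
    ‖𝓕 (∂_{EuclideanSpace.single i (1 : ℝ)} g) ξ‖ ^ 2
      = (2 * Real.pi) ^ 2 * (ξ i ^ 2 * ‖𝓕 g ξ‖ ^ 2) := by
  have h : (fun x : V => inner ℝ x (EuclideanSpace.single i (1 : ℝ))).HasTemperateGrowth := by
    fun_prop
  rw [SchwartzMap.fourier_lineDerivOp_eq, smul_apply,
    SchwartzMap.smulLeftCLM_apply_apply h]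
  have h' : inner ℝ ξ (EuclideanSpace.single i (1 : ℝ)) = ξ i := by
    rw [EuclideanSpace.inner_single_right]; simp
  rw [h']
  simp [mul_pow, abs_of_pos Real.pi_pos]

lemma four_ge (g : 𝓢(V, ℂ)) (i : Fin 3) (ξ : V) :
    ξ i ^ 2 * ‖𝓕 g ξ‖ ^ 2 ≤ ‖𝓕 (∂_{EuclideanSpace.single i (1 : ℝ)} g) ξ‖ ^ 2 := by
  rw [four]
  have : (1 : ℝ) ≤ (2 * Real.pi) ^ 2 := by nlinarith [Real.pi_gt_three]
  exact le_mul_of_one_le_left (by positivity) this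

lemma sqint {F : Type*} [NormedAddCommGroup F] [NormedSpace ℝ F] (g : 𝓢(V, F)) :
    Integrable (fun x => ‖g x‖ ^ 2) :=
  (g.memLp 2 volume).integrable_norm_pow (by norm_num)

lemma sq_eq {F : Type*} [NormedAddCommGroup F] [NormedSpace ℝ F] (g : 𝓢(V, F)) :
    ∫ x, ‖g x‖ ^ 2 = (eLpNorm g 2 volume).toReal ^ 2 := by
  rw [(g.memLp 2 volume).eLpNorm_eq_integral_rpow_norm (by norm_num) (by norm_num)]
  have h0 : 0 ≤ ∫ x, ‖g x‖ ^ 2 := by positivity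
  simp only [ENNReal.toReal_ofNat, Real.rpow_two]
  rw [ENNReal.toReal_ofReal (by positivity), ← Real.rpow_natCast, ← Real.rpow_mul h0]
  norm_num

lemma deriv_le (f : 𝓢(V, ℝ)) (i : Fin 3) (x : V) :
    ‖∂_{EuclideanSpace.single i (1 : ℝ)} f x‖ ≤ ‖SchwartzMap.fderivCLM ℝ V ℝ f x‖ := by
  rw [SchwartzMap.lineDerivOp_apply_eq_fderiv, SchwartzMap.fderivCLM_apply]
  exact (ContinuousLinearMap.le_opNorm _ _).trans (by simp)

lemma deriv2_le (f : 𝓢(V, ℝ)) (i : Fin 3) (x : V) :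
    ‖∂_{EuclideanSpace.single i (1 : ℝ)} (∂_{EuclideanSpace.single i (1 : ℝ)} f) x‖ ≤
      ‖SchwartzMap.fderivCLM ℝ V _ (SchwartzMap.fderivCLM ℝ V ℝ f) x‖ := by
  set e : V := EuclideanSpace.single i (1 : ℝ)
  have : ∂_{e} (∂_{e} f) x = (SchwartzMap.fderivCLM ℝ V _ (SchwartzMap.fderivCLM ℝ V ℝ f) x) e e := by
    rw [SchwartzMap.lineDerivOp_apply_eq_fderiv]
    have h : (⇑(∂_{e} f : 𝓢(V, ℝ))) = fun y => (SchwartzMap.fderivCLM ℝ V ℝ f y) e := by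
      ext y
      rw [SchwartzMap.lineDerivOp_apply_eq_fderiv, SchwartzMap.fderivCLM_apply]
    rw [h, fderiv_clm_apply (SchwartzMap.differentiableAt _) (by fun_prop),
      SchwartzMap.fderivCLM_apply ℝ (SchwartzMap.fderivCLM ℝ V ℝ f)]
    simp
  rw [this]
  have he : ‖e‖ = 1 := by simp [e]
  exact (ContinuousLinearMap.le_opNorm₂ _ _ _).trans (by simp [he])

/-- complexification -/
noncomputable def cx (f : 𝓢(V, ℝ)) : 𝓢(V, ℂ) := f.postcompCLM Complex.ofRealCLM

lemma cx_norm (f : 𝓢(V, ℝ)) (x : V) : ‖cx f x‖ = ‖f x‖ := by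
  simp [cx]

lemma cx_deriv (f : 𝓢(V, ℝ)) (m : V) : ∂_{m} (cx f) = cx (∂_{m} f) := by
  ext x
  rw [SchwartzMap.lineDerivOp_apply_eq_fderiv]
  have : (⇑(cx f)) = Complex.ofRealCLM ∘ f := by ext; simp [cx]
  rw [this, fderiv_comp _ (by fun_prop) f.differentiableAt]
  simp [cx, SchwartzMap.lineDerivOp_apply_eq_fderiv]

lemma sup_le (g : 𝓢(V, ℂ)) (x : V) : ‖g x‖ ≤ ∫ ξ, ‖𝓕 g ξ‖ := by
  have h : g x = 𝓕⁻ (𝓕 g) x := by rw [FourierTransform.fourierInv_fourier_eq]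
  rw [h, SchwartzMap.fourierInv_coe, Real.fourierInv_eq]
  refine (norm_integral_le_integral_norm _).trans_eq ?_
  simp

lemma main1 (f : 𝓢(V, ℝ)) (x : V) (s t : ℝ) (hs : 0 < s) (ht : 0 < t) (A B : ℝ)
    (hA : ∫ x, ‖SchwartzMap.fderivCLM ℝ V ℝ f x‖ ^ 2 = A ^ 2)
    (hB : ∫ x, ‖SchwartzMap.fderivCLM ℝ V _ (SchwartzMap.fderivCLM ℝ V ℝ f) x‖ ^ 2 = B ^ 2) :
    ‖f x‖ ≤ t * (3 * (volume.real (Metric.ball (0 : V) 1) * (Real.pi / 2)))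
      + (s * (3 * A ^ 2) + 3 * (3 * B ^ 2) / s) / t := by
  let e : Fin 3 → V := fun i => EuclideanSpace.single i (1 : ℝ)
  let g := cx f
  have hw := weight s hs
  have hP : ∑ i, ∫ ξ, ‖𝓕 (∂_{e i} g) ξ‖ ^ 2 ≤ 3 * A ^ 2 := by
    calc _ ≤ ∑ i : Fin 3, A ^ 2 := by
          refine Finset.sum_le_sum fun i _ => ?_
          rw [SchwartzMap.integral_norm_sq_fourier, ← hA]
          refine integral_mono (sqint _) (sqint _) fun x => ?_
          simp only [g, cx_deriv, cx_norm]
          gcongr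
          exact deriv_le f i x
      _ = _ := by simp
  have hQ : ∑ i, ∫ ξ, ‖𝓕 (∂_{e i} (∂_{e i} g)) ξ‖ ^ 2 ≤ 3 * B ^ 2 := by
    calc _ ≤ ∑ i : Fin 3, B ^ 2 := by
          refine Finset.sum_le_sum fun i _ => ?_
          rw [SchwartzMap.integral_norm_sq_fourier, ← hB]
          refine integral_mono (sqint _) (sqint _) fun x => ?_
          simp only [g, cx_deriv, cx_norm]
          gcongr
          exact deriv2_le f i x
      _ = _ := by simp
  let P : V → ℝ := fun ξ => ∑ i, ‖𝓕 (∂_{e i} g) ξ‖ ^ 2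
  let Q : V → ℝ := fun ξ => ∑ i, ‖𝓕 (∂_{e i} (∂_{e i} g)) ξ‖ ^ 2
  have hPi : Integrable P := integrable_finsetSum _ fun i _ => sqint _
  have hQi : Integrable Q := integrable_finsetSum _ fun i _ => sqint _
  have hPP : ∫ ξ, P ξ ≤ 3 * A ^ 2 := by
    rw [integral_finsetSum _ fun i _ => sqint _]; exact hP
  have hQQ : ∫ ξ, Q ξ ≤ 3 * B ^ 2 := by
    rw [integral_finsetSum _ fun i _ => sqint _]; exact hQ
  have pP : ∀ ξ, ‖ξ‖ ^ 2 * ‖𝓕 g ξ‖ ^ 2 ≤ P ξ := by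
    intro ξ
    rw [EuclideanSpace.real_norm_sq_eq, Finset.sum_mul]
    exact Finset.sum_le_sum fun i _ => four_ge g i ξ
  have pQ : ∀ ξ, ‖ξ‖ ^ 4 * ‖𝓕 g ξ‖ ^ 2 ≤ 3 * Q ξ := by
    intro ξ
    have h1 : ∀ i, ξ i ^ 4 * ‖𝓕 g ξ‖ ^ 2 ≤ ‖𝓕 (∂_{e i} (∂_{e i} g)) ξ‖ ^ 2 := by
      intro i
      refine le_trans ?_ (four_ge (∂_{e i} g) i ξ)
      calc _ = ξ i ^ 2 * (ξ i ^ 2 * ‖𝓕 g ξ‖ ^ 2) := by ring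
        _ ≤ _ := by gcongr; exact four_ge g i ξ
    have h2 : ‖ξ‖ ^ 4 ≤ 3 * ∑ i, ξ i ^ 4 := by
      have : ‖ξ‖ ^ 4 = (‖ξ‖ ^ 2) ^ 2 := by ring
      rw [this, EuclideanSpace.real_norm_sq_eq]
      simp only [Fin.sum_univ_three]
      nlinarith [sq_nonneg (ξ 0 ^ 2 - ξ 1 ^ 2), sq_nonneg (ξ 0 ^ 2 - ξ 2 ^ 2),
        sq_nonneg (ξ 1 ^ 2 - ξ 2 ^ 2)]
    calc _ ≤ (3 * ∑ i, ξ i ^ 4) * ‖𝓕 g ξ‖ ^ 2 := by gcongr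
      _ = 3 * ∑ i, ξ i ^ 4 * ‖𝓕 g ξ‖ ^ 2 := by rw [mul_assoc, Finset.sum_mul]
      _ ≤ _ := mul_le_mul_of_nonneg_left (Finset.sum_le_sum fun i _ => h1 i) (by norm_num)
  have hae : ∀ᵐ ξ : V, ‖𝓕 g ξ‖ ≤ t * (s * ‖ξ‖ ^ 2 + ‖ξ‖ ^ 4 / s)⁻¹
      + (s * P ξ + 3 * Q ξ / s) / t := by
    have : ∀ᵐ ξ : V, ξ ≠ 0 := by simp [ae_iff]
    filter_upwards [this] with ξ hξ
    have hr : 0 < ‖ξ‖ := norm_pos_iff.2 hξ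
    set y := ‖𝓕 g ξ‖
    set w := s * ‖ξ‖ ^ 2 + ‖ξ‖ ^ 4 / s with hwd
    have hwp : 0 < w := by positivity
    have h1 : w * y ^ 2 ≤ s * P ξ + 3 * Q ξ / s := by
      calc w * y ^ 2 = s * (‖ξ‖ ^ 2 * y ^ 2) + (‖ξ‖ ^ 4 * y ^ 2) / s := by rw [hwd]; ring
        _ ≤ _ := add_le_add (mul_le_mul_of_nonneg_left (pP ξ) hs.le)
          (div_le_div_of_nonneg_right (pQ ξ) hs.le)
    have h2 : y ≤ t * w⁻¹ + w * y ^ 2 / t := by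
      have h3 : t * w⁻¹ + w * y ^ 2 / t - y = ((t - w * y) ^ 2 + t * w * y) / (w * t) := by
        field_simp; ring
      have h4 : 0 ≤ ((t - w * y) ^ 2 + t * w * y) / (w * t) := by positivity
      linarith
    refine h2.trans ?_
    gcongr
  have i1 : Integrable (fun ξ : V => t * (s * ‖ξ‖ ^ 2 + ‖ξ‖ ^ 4 / s)⁻¹) := hw.1.const_mul _
  have i2 : Integrable (fun ξ : V => s * P ξ) := hPi.const_mul _
  have i3 : Integrable (fun ξ : V => 3 * Q ξ / s) := (hQi.const_mul _).div_const _
  have i4 : Integrable (fun ξ : V => (s * P ξ + 3 * Q ξ / s) / t) := (i2.add i3).div_const _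
  calc ‖f x‖ = ‖g x‖ := (cx_norm f x).symm
    _ ≤ ∫ ξ, ‖𝓕 g ξ‖ := sup_le g x
    _ ≤ ∫ ξ : V, (t * (s * ‖ξ‖ ^ 2 + ‖ξ‖ ^ 4 / s)⁻¹ + (s * P ξ + 3 * Q ξ / s) / t) :=
      integral_mono_ae (𝓕 g).integrable.norm (i1.add i4) hae
    _ = t * (3 * (volume.real (Metric.ball (0 : V) 1) * (Real.pi / 2)))
        + (s * (∫ ξ, P ξ) + 3 * (∫ ξ, Q ξ) / s) / t := by
      rw [integral_add i1 i4, integral_const_mul, hw.2, integral_div, integral_add i2 i3,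
        integral_const_mul, integral_div, integral_const_mul]
    _ ≤ _ := by gcongr

/-- the constant -/
noncomputable def K : ℝ := 3 * (volume.real (Metric.ball (0 : V) 1) * (Real.pi / 2)) + 12

lemma main2 (f : 𝓢(V, ℝ)) (x : V) (A B : ℝ) (hA0 : 0 ≤ A) (hB0 : 0 ≤ B)
    (hA : ∫ x, ‖SchwartzMap.fderivCLM ℝ V ℝ f x‖ ^ 2 = A ^ 2)
    (hB : ∫ x, ‖SchwartzMap.fderivCLM ℝ V _ (SchwartzMap.fderivCLM ℝ V ℝ f) x‖ ^ 2 = B ^ 2) :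
    ‖f x‖ ≤ K * Real.sqrt A * Real.sqrt B := by
  have hε : ∀ ε > 0, ‖f x‖ ≤ K * Real.sqrt (A + ε) * Real.sqrt (B + ε) := by
    intro ε hε
    set a := Real.sqrt (A + ε) with ha
    set b := Real.sqrt (B + ε) with hb
    have ha0 : 0 < a := Real.sqrt_pos.2 (by positivity)
    have hb0 : 0 < b := Real.sqrt_pos.2 (by positivity)
    have ha2 : A ≤ a ^ 2 := by rw [ha, Real.sq_sqrt (by positivity)]; linarith
    have hb2 : B ≤ b ^ 2 := by rw [hb, Real.sq_sqrt (by positivity)]; linarith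
    have h := main1 f x (b ^ 2 / a ^ 2) (a * b) (by positivity) (by positivity) A B hA hB
    refine h.trans ?_
    calc _ ≤ (a * b) * (3 * (volume.real (Metric.ball (0 : V) 1) * (Real.pi / 2)))
      + ((b ^ 2 / a ^ 2) * (3 * (a ^ 2) ^ 2) + 3 * (3 * (b ^ 2) ^ 2) / (b ^ 2 / a ^ 2)) / (a * b) := by
          gcongr
      _ = K * a * b := by
          unfold K
          field_simp
          ring
  have hc : Filter.Tendsto (fun ε : ℝ => K * Real.sqrt (A + ε) * Real.sqrt (B + ε))
      (nhdsWithin 0 (Set.Ioi 0)) (nhds (K * Real.sqrt (A + 0) * Real.sqrt (B + 0))) := by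
    refine Filter.Tendsto.mono_left (Continuous.tendsto ?_ 0) nhdsWithin_le_nhds
    fun_prop
  simp only [add_zero] at hc
  exact ge_of_tendsto hc (Filter.eventually_of_mem self_mem_nhdsWithin hε)

end LinftyAux

/-- There is `C > 0` such that every Schwartz function `f : ℝ³ → ℝ` satisfies
`‖f‖_{L^∞} ≤ C ‖∇f‖_{L²}^{1/2} ‖∇²f‖_{L²}^{1/2}`. -/
theorem linfty_le_sqrt_grad_mul_sqrt_grad2 :
    ∃ C : ℝ≥0, 0 < C ∧ ∀ f : SchwartzMap (EuclideanSpace ℝ (Fin 3)) ℝ,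
      eLpNorm (⇑f) ⊤ volume ≤
        (C : ℝ≥0∞) * (eLpNorm (iteratedFDeriv ℝ 1 ⇑f) 2 volume) ^ (1 / 2 : ℝ) *
          (eLpNorm (iteratedFDeriv ℝ 2 ⇑f) 2 volume) ^ (1 / 2 : ℝ) := by
  have hK : 0 < LinftyAux.K := by unfold LinftyAux.K; positivity
  refine ⟨⟨LinftyAux.K, hK.le⟩, hK, fun f => ?_⟩
  set f1 := SchwartzMap.fderivCLM ℝ LinftyAux.V ℝ f with hf1
  set f2 := SchwartzMap.fderivCLM ℝ LinftyAux.V _ f1 with hf2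
  have c1 : (⇑f1) = fderiv ℝ f := by ext1 y; rw [hf1, SchwartzMap.fderivCLM_apply]
  have c2 : (⇑f2) = fderiv ℝ f1 := by ext1 y; rw [hf2, SchwartzMap.fderivCLM_apply]
  have e1 : eLpNorm (iteratedFDeriv ℝ 1 ⇑f) 2 volume = eLpNorm f1 2 volume := by
    refine eLpNorm_congr_norm_ae (Filter.Eventually.of_forall fun x => ?_)
    rw [norm_iteratedFDeriv_one, c1]
  have e2 : eLpNorm (iteratedFDeriv ℝ 2 ⇑f) 2 volume = eLpNorm f2 2 volume := by
    refine eLpNorm_congr_norm_ae (Filter.Eventually.of_forall fun x => ?_)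
    rw [c2, ← norm_iteratedFDeriv_fderiv, norm_iteratedFDeriv_one, c1]
  rw [e1, e2]
  have t1 := (f1.memLp 2 volume).eLpNorm_ne_top
  have t2 := (f2.memLp 2 volume).eLpNorm_ne_top
  have hm := fun x => LinftyAux.main2 f x _ _ ENNReal.toReal_nonneg ENNReal.toReal_nonneg
    (LinftyAux.sq_eq f1) (LinftyAux.sq_eq f2)
  refine (eLpNorm_le_of_ae_bound (Filter.Eventually.of_forall hm)).trans ?_
  simp only [ENNReal.toReal_top, inv_zero, ENNReal.rpow_zero, one_mul]
  rw [ENNReal.ofReal_mul (by positivity), ENNReal.ofReal_mul hK.le, Real.sqrt_eq_rpow,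
    Real.sqrt_eq_rpow, ENNReal.toReal_rpow, ENNReal.toReal_rpow,
    ENNReal.ofReal_toReal (by simp [t1]), ENNReal.ofReal_toReal (by simp [t2])]
  refine le_of_eq ?_
  congr 2
  exact ENNReal.ofReal_eq_coe_nnreal hK.le
end

section
/- There exists a constant C > 0 such that for all Schwartz functions f, g : ℝ³ → ℝ one has ‖fg‖_{L²} + ‖∇(fg)‖_{L²} ≤ C (‖f‖_{L²} + ‖∇f‖_{L²}) (‖∇g‖_{L²} + ‖∇²g‖_{L²}), i.e. ‖fg‖_{H¹} ≤ C ‖f‖_{H¹} ‖∇g‖_{H¹}. -/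
open MeasureTheory
open scoped NNReal ENNReal


open Filter Topology in
/-- Truncations of a Schwartz function with controlled gradient. -/
lemma aux_trunc {F : Type*} [NormedAddCommGroup F] [NormedSpace ℝ F]
    (u : SchwartzMap (EuclideanSpace ℝ (Fin 3)) F) :
    ∃ (v : ℕ → EuclideanSpace ℝ (Fin 3) → F) (c : ℕ → ℝ), (∀ n, ContDiff ℝ 1 (v n)) ∧
      (∀ n, HasCompactSupport (v n)) ∧ (∀ n, 0 ≤ c n) ∧ Tendsto c atTop (𝓝 0) ∧
      (∀ n x, ‖fderiv ℝ (v n) x‖ ≤ ‖fderiv ℝ u x‖ + c n * ‖u x‖) ∧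
      (∀ x, Tendsto (fun n => v n x) atTop (𝓝 (u x))) := by
  obtain ⟨χ⟩ : Nonempty (ContDiffBump (0 : EuclideanSpace ℝ (Fin 3))) := ⟨⟨1, 2, one_pos, one_lt_two⟩⟩
  have hχ1 : ContDiff ℝ 1 χ := χ.contDiff
  obtain ⟨M, hM⟩ : ∃ M, ∀ x, ‖fderiv ℝ χ x‖ ≤ M :=
    (χ.hasCompactSupport.fderiv (𝕜 := ℝ)).exists_bound_of_continuous
      (hχ1.continuous_fderiv one_ne_zero)
  have hM0 : 0 ≤ M := (norm_nonneg _).trans (hM 0)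
  let t : ℕ → ℝ := fun n => 1 / ((n : ℝ) + 1)
  have ht0 : ∀ n, 0 < t n := fun n => by positivity
  have ht : Tendsto t atTop (𝓝 0) := tendsto_one_div_add_atTop_nhds_zero_nat
  let χn : ℕ → EuclideanSpace ℝ (Fin 3) → ℝ := fun n x => χ (t n • x)
  have hχn : ∀ n, ContDiff ℝ 1 (χn n) := fun n => hχ1.comp (contDiff_const_smul (t n))
  have hu1 : ContDiff ℝ 1 u := u.smooth 1
  have hv : ∀ n, ContDiff ℝ 1 (fun x => χn n x • u x) := fun n => (hχn n).smul hu1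
  have hcs : ∀ n, HasCompactSupport (fun x => χn n x • u x) := fun n => by
    have : HasCompactSupport (χn n) :=
      χ.hasCompactSupport.comp_homeomorph (Homeomorph.smulOfNeZero (t n) (ht0 n).ne')
    exact this.smul_right
  have hd : ∀ n x, ‖fderiv ℝ (fun x => χn n x • u x) x‖
      ≤ ‖fderiv ℝ u x‖ + (t n * M) * ‖u x‖ := fun n x => by
    have hdχ : HasFDerivAt (χn n) (t n • fderiv ℝ χ (t n • x)) x := by
      have h1 := (hχ1.differentiable one_ne_zero (t n • x)).hasFDerivAt
      have h2 : HasFDerivAt (fun x : EuclideanSpace ℝ (Fin 3) => t n • x)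
        (t n • ContinuousLinearMap.id ℝ _) x := (hasFDerivAt_id x).const_smul (t n)
      have h3 := h1.comp x h2
      rw [ContinuousLinearMap.comp_smul, ContinuousLinearMap.comp_id] at h3
      exact h3
    have hdu := (hu1.differentiable one_ne_zero x).hasFDerivAt
    rw [show fderiv ℝ (fun x => χn n x • u x) x = _ from (hdχ.smul hdu).fderiv]
    refine (norm_add_le _ _).trans ?_
    gcongr
    · rw [norm_smul]
      have : ‖χn n x‖ ≤ 1 := by
        rw [Real.norm_of_nonneg χ.nonneg]; exact χ.le_one
      exact mul_le_of_le_one_left (norm_nonneg _) this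
    · rw [ContinuousLinearMap.norm_smulRight_apply, norm_smul, Real.norm_of_nonneg (ht0 n).le]
      have := hM (t n • x)
      have := (ht0 n).le
      gcongr
  have hlim : ∀ x, Tendsto (fun n => χn n x • u x) atTop (𝓝 (u x)) := fun x => by
    have h1 : Tendsto (fun n => t n • x) atTop (𝓝 (0 : EuclideanSpace ℝ (Fin 3))) := by
      simpa using ht.smul_const x
    have h2 : Tendsto (fun n => χn n x) atTop (𝓝 1) := by
      have := (χ.continuous.tendsto 0).comp h1
      rwa [χ.eventuallyEq_one.eq_of_nhds] at this
    simpa using h2.smul_const (u x)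
  exact ⟨fun n x => χn n x • u x, fun n => t n * M, hv, hcs, fun n => mul_nonneg (ht0 n).le hM0,
    by simpa using ht.mul_const M, hd, hlim⟩

open Filter Topology in
/-- Gagliardo–Nirenberg–Sobolev inequality for Schwartz functions, by truncation. -/
lemma aux_sobolev_six {F : Type*} [NormedAddCommGroup F] [NormedSpace ℝ F]
    [FiniteDimensional ℝ F] :
    ∃ K : ℝ≥0, ∀ u : SchwartzMap (EuclideanSpace ℝ (Fin 3)) F,
      eLpNorm (⇑u) 6 volume ≤ K * eLpNorm (fderiv ℝ ⇑u) 2 volume := by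
  obtain ⟨K, hK⟩ : ∃ K : ℝ≥0, ∀ v : EuclideanSpace ℝ (Fin 3) → F, ContDiff ℝ 1 v →
      HasCompactSupport v → eLpNorm v 6 volume ≤ K * eLpNorm (fderiv ℝ v) 2 volume := by
    refine ⟨SNormLESNormFDerivOfEqConst F
      (volume : Measure (EuclideanSpace ℝ (Fin 3))) (2 : ℝ≥0), fun v hv hc => ?_⟩
    have h := eLpNorm_le_eLpNorm_fderiv_of_eq volume hv hc (p := 2) (p' := 6)
      (by norm_num) (by simp) (by simp; norm_num)
    rw [ENNReal.coe_ofNat, ENNReal.coe_ofNat] at h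
    exact h
  refine ⟨K, fun u => ?_⟩
  obtain ⟨v, c, hv, hcs, hc0, hc, hd, hlim⟩ := aux_trunc u
  have hu1 : ContDiff ℝ 1 u := u.smooth 1
  have hmu : AEStronglyMeasurable (fun x => ‖u x‖) volume :=
    u.continuous.norm.aestronglyMeasurable
  have hmdu : AEStronglyMeasurable (fun x => ‖fderiv ℝ u x‖) volume :=
    (hu1.continuous_fderiv one_ne_zero).norm.aestronglyMeasurable
  have hbound : ∀ n, eLpNorm (v n) 6 volume
      ≤ K * (eLpNorm (fderiv ℝ u) 2 volume
        + ENNReal.ofReal (c n) * eLpNorm u 2 volume) := fun n => by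
    refine (hK (v n) (hv n) (hcs n)).trans ?_
    gcongr
    have h2 : eLpNorm (fderiv ℝ (v n)) 2 volume
        ≤ eLpNorm ((fun x => ‖fderiv ℝ u x‖) + (c n) • (fun x => ‖u x‖)) 2 volume :=
      eLpNorm_mono_real (hd n)
    refine h2.trans ?_
    refine (eLpNorm_add_le hmdu (hmu.const_smul _) (by norm_num)).trans ?_
    rw [eLpNorm_norm, eLpNorm_const_smul, eLpNorm_norm, Real.enorm_of_nonneg (hc0 n)]
  refine (Lp.eLpNorm_lim_le_liminf_eLpNorm
    (fun n => (hv n).continuous.aestronglyMeasurable) u (ae_of_all _ hlim)).trans ?_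
  refine (liminf_le_liminf (Eventually.of_forall hbound)).trans ?_
  refine (Tendsto.liminf_eq ?_).le
  have h0 : Tendsto (fun n => ENNReal.ofReal (c n)) atTop (𝓝 0) := by
    have := ENNReal.tendsto_ofReal hc
    simpa using this
  have h1 := ENNReal.Tendsto.mul_const h0 (b := eLpNorm u 2 volume)
    (Or.inr (u.memLp 2 volume).eLpNorm_ne_top)
  have h2 := ENNReal.Tendsto.const_mul (a := (K : ℝ≥0∞))
    (h1.const_add (eLpNorm (fderiv ℝ u) 2 volume)) (Or.inr ENNReal.coe_ne_top)
  simpa using h2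


lemma aux_interp {E F : Type*} [MeasurableSpace E] [NormedAddCommGroup F] {μ : Measure E}
    {u : E → F} (hu : AEStronglyMeasurable u μ) :
    eLpNorm u 3 μ ≤ eLpNorm u 2 μ + eLpNorm u 6 μ := by
  have hm : AEStronglyMeasurable (fun x => ‖u x‖ ^ (1 / 2 : ℝ)) μ :=
    (hu.norm.aemeasurable.pow_const _).aestronglyMeasurable
  have : ENNReal.HolderTriple 4 12 3 := ⟨by
    rw [← ENNReal.toReal_eq_toReal_iff' (by finiteness) (by finiteness),
      ENNReal.toReal_add (by finiteness) (by finiteness)]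
    simp [ENNReal.toReal_inv]; norm_num⟩
  have h := eLpNorm_smul_le_mul_eLpNorm (p := 4) (q := 12) (r := 3) hm hm
  have e : eLpNorm u 3 μ = eLpNorm ((fun x => ‖u x‖ ^ (1 / 2 : ℝ)) •
      (fun x => ‖u x‖ ^ (1 / 2 : ℝ))) 3 μ := by
    rw [← eLpNorm_norm]
    congr 1
    ext x
    simp only [Pi.smul_apply', smul_eq_mul]
    rw [← Real.rpow_add_of_nonneg (norm_nonneg _) (by norm_num) (by norm_num)]
    norm_num
  rw [e]
  refine h.trans ?_
  have e1 : (4 : ℝ≥0∞) * ENNReal.ofReal (1 / 2) = 2 := by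
    rw [← ENNReal.toReal_eq_toReal_iff' (by finiteness) (by finiteness)]; simp; norm_num
  have e2 : (12 : ℝ≥0∞) * ENNReal.ofReal (1 / 2) = 6 := by
    rw [← ENNReal.toReal_eq_toReal_iff' (by finiteness) (by finiteness)]; simp; norm_num
  rw [eLpNorm_norm_rpow _ (by norm_num), eLpNorm_norm_rpow _ (by norm_num), e1, e2]
  set a := eLpNorm u 2 μ
  set b := eLpNorm u 6 μ
  calc a ^ (1 / 2 : ℝ) * b ^ (1 / 2 : ℝ) ≤ (a + b) ^ (1 / 2 : ℝ) * (a + b) ^ (1 / 2 : ℝ) := by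
        gcongr <;> simp
    _ = a + b := by
        rw [← ENNReal.rpow_add_of_nonneg _ _ (by norm_num) (by norm_num)]; norm_num

open scoped FourierTransform LineDeriv

noncomputable def auxW (r : ℝ) : ℝ := (r * (1 + r))⁻¹

lemma aux_weight : eLpNorm (fun ξ : EuclideanSpace ℝ (Fin 3) => auxW ‖ξ‖) 2 volume < ∞ := by
  have hm : Measurable auxW := by unfold auxW; fun_prop
  have hm' : AEStronglyMeasurable (fun ξ : EuclideanSpace ℝ (Fin 3) => auxW ‖ξ‖) volume :=
    (hm.comp measurable_norm).aestronglyMeasurable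
  suffices h : MemLp (fun ξ : EuclideanSpace ℝ (Fin 3) => auxW ‖ξ‖) 2 volume from h.2
  rw [memLp_two_iff_integrable_sq hm',
    integrable_fun_norm_addHaar (volume : Measure (EuclideanSpace ℝ (Fin 3)))
      (f := fun r => auxW r ^ 2)]
  refine Integrable.mono' (integrable_inv_one_add_sq.integrableOn (s := Set.Ioi 0)) ?_ ?_
  · exact Measurable.aestronglyMeasurable (by fun_prop)
  · refine (ae_restrict_iff' measurableSet_Ioi).2 (ae_of_all _ fun y hy => ?_)
    have hy : 0 < y := hy
    simp only [finrank_euclideanSpace, Fintype.card_fin, smul_eq_mul, auxW]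
    rw [Real.norm_of_nonneg (by positivity)]
    have : y ^ (3 - 1) * (y * (1 + y))⁻¹ ^ 2 = ((1 + y) ^ 2)⁻¹ := by
      field_simp
    rw [this]
    gcongr
    nlinarith

noncomputable def auxF (u : SchwartzMap (EuclideanSpace ℝ (Fin 3)) ℂ) :
    SchwartzMap (EuclideanSpace ℝ (Fin 3)) ℂ := 𝓕 u

lemma aux_plancherel (u : SchwartzMap (EuclideanSpace ℝ (Fin 3)) ℂ) :
    eLpNorm (⇑(auxF u)) 2 volume = eLpNorm (⇑u) 2 volume := by
  have h : ∫ ξ, ‖auxF u ξ‖ ^ 2 = ∫ x, ‖u x‖ ^ 2 := SchwartzMap.integral_norm_sq_fourier u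
  rw [MemLp.eLpNorm_eq_integral_rpow_norm two_ne_zero ENNReal.ofNat_ne_top ((auxF u).memLp 2 volume),
    MemLp.eLpNorm_eq_integral_rpow_norm two_ne_zero ENNReal.ofNat_ne_top (u.memLp 2 volume)]
  simp only [ENNReal.toReal_ofNat, Real.rpow_ofNat]
  rw [h]

noncomputable abbrev auxE (i : Fin 3) : EuclideanSpace ℝ (Fin 3) := EuclideanSpace.single i 1

lemma aux_coord (u : SchwartzMap (EuclideanSpace ℝ (Fin 3)) ℂ) (ξ : EuclideanSpace ℝ (Fin 3)) :
    ‖ξ‖ * ‖auxF u ξ‖ ≤ ∑ i, ‖auxF (∂_{auxE i} u) ξ‖ := by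
  have h1 : ∀ i, |ξ i| * ‖auxF u ξ‖ ≤ ‖auxF (∂_{auxE i} u) ξ‖ := fun i => by
    have : (fun x : EuclideanSpace ℝ (Fin 3) => inner ℝ x (auxE i)).HasTemperateGrowth := by
      fun_prop
    rw [show auxF (∂_{auxE i} u) = 𝓕 (∂_{auxE i} u) from rfl, SchwartzMap.fourier_lineDerivOp_eq, smul_apply,
      SchwartzMap.smulLeftCLM_apply_apply this]
    change |ξ i| * ‖auxF u ξ‖ ≤ ‖_ • _ • auxF u ξ‖
    simp only [norm_smul, norm_mul, Complex.norm_I, Complex.norm_real, auxE,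
      EuclideanSpace.inner_single_right]
    simp
    rw [abs_of_pos Real.pi_pos]
    have := Real.pi_gt_three
    exact le_mul_of_one_le_left (by positivity) (by linarith)
  have h2 : ‖ξ‖ ≤ ∑ i, |ξ i| := by
    rw [EuclideanSpace.norm_eq]
    refine Real.sqrt_le_iff.2 ⟨by positivity, ?_⟩
    simp only [Fin.sum_univ_three, Real.norm_eq_abs]
    nlinarith [abs_nonneg (ξ 0), abs_nonneg (ξ 1), abs_nonneg (ξ 2),
      mul_nonneg (abs_nonneg (ξ 0)) (abs_nonneg (ξ 1)),
      mul_nonneg (abs_nonneg (ξ 0)) (abs_nonneg (ξ 2)),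
      mul_nonneg (abs_nonneg (ξ 1)) (abs_nonneg (ξ 2))]
  calc ‖ξ‖ * ‖auxF u ξ‖ ≤ (∑ i, |ξ i|) * ‖auxF u ξ‖ := by gcongr
    _ = ∑ i, |ξ i| * ‖auxF u ξ‖ := by rw [Finset.sum_mul]
    _ ≤ _ := Finset.sum_le_sum fun i _ => h1 i

lemma aux_sup : ∃ K : ℝ≥0, ∀ g : SchwartzMap (EuclideanSpace ℝ (Fin 3)) ℝ,
    eLpNorm (⇑g) ∞ volume ≤ K * (eLpNorm (iteratedFDeriv ℝ 1 ⇑g) 2 volume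
            + eLpNorm (iteratedFDeriv ℝ 2 ⇑g) 2 volume) := by
  set W := eLpNorm (fun ξ : EuclideanSpace ℝ (Fin 3) => auxW ‖ξ‖) 2 volume with hW
  have hWt : W ≠ ∞ := aux_weight.ne
  refine ⟨W.toNNReal * 9, fun g => ?_⟩
  set A := eLpNorm (iteratedFDeriv ℝ 1 ⇑g) 2 volume with hA
  set B := eLpNorm (iteratedFDeriv ℝ 2 ⇑g) 2 volume with hB
  let u : SchwartzMap (EuclideanSpace ℝ (Fin 3)) ℂ := g.postcompCLM Complex.ofRealCLM
  have hu1 : ∀ i x, ∂_{auxE i} u x = ((∂_{auxE i} g x : ℝ) : ℂ) := fun i x => by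
    have hg := (g.differentiableAt (x := x)).hasFDerivAt
    have := (Complex.ofRealCLM.hasFDerivAt (x := g x)).comp x hg
    have h2 : fderiv ℝ u x = _ := this.fderiv
    simp [SchwartzMap.lineDerivOp_apply_eq_fderiv, h2]
  have hu1' : ∀ i, ∂_{auxE i} u = (∂_{auxE i} g).postcompCLM Complex.ofRealCLM := fun i => by
    ext x; exact hu1 i x
  have hu2 : ∀ i j x, ∂_{auxE j} (∂_{auxE i} u) x = ((∂_{auxE j} (∂_{auxE i} g) x : ℝ) : ℂ) := by
    intro i j x
    rw [hu1' i]
    have hg := ((∂_{auxE i} g).differentiableAt (x := x)).hasFDerivAt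
    have := (Complex.ofRealCLM.hasFDerivAt (x := (∂_{auxE i} g) x)).comp x hg
    have h2 : fderiv ℝ ((∂_{auxE i} g).postcompCLM Complex.ofRealCLM) x = _ := this.fderiv
    rw [SchwartzMap.lineDerivOp_apply_eq_fderiv, h2, SchwartzMap.lineDerivOp_apply_eq_fderiv]
    simp
  have hn : ∀ i, ‖auxE i‖ = 1 := fun i => by simp [auxE]
  have b1 : ∀ i, eLpNorm (⇑(auxF (∂_{auxE i} u))) 2 volume ≤ A := fun i => by
    rw [aux_plancherel]
    refine eLpNorm_mono fun x => ?_
    rw [hu1, Complex.norm_real, norm_iteratedFDeriv_one, SchwartzMap.lineDerivOp_apply_eq_fderiv]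
    simpa [hn] using (fderiv ℝ g x).le_opNorm (auxE i)
  have b2 : ∀ i j, eLpNorm (⇑(auxF (∂_{auxE j} (∂_{auxE i} u)))) 2 volume ≤ B := fun i j => by
    rw [aux_plancherel]
    refine eLpNorm_mono fun x => ?_
    rw [hu2, Complex.norm_real, ← norm_iteratedFDeriv_fderiv, norm_iteratedFDeriv_one]
    have e : ⇑(∂_{auxE i} g : SchwartzMap (EuclideanSpace ℝ (Fin 3)) ℝ) = fun y => fderiv ℝ g y (auxE i) := by
      ext y; rw [SchwartzMap.lineDerivOp_apply_eq_fderiv]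
    have hd : DifferentiableAt ℝ (fderiv ℝ g) x :=
      ((g.smooth 2).fderiv_right (m := 1) (by norm_num)).differentiable one_ne_zero x
    rw [SchwartzMap.lineDerivOp_apply_eq_fderiv, e, fderiv_clm_apply hd (by fun_prop)]
    simp only [fderiv_fun_const, Pi.zero_apply, ContinuousLinearMap.comp_zero, zero_add,
      ContinuousLinearMap.flip_apply]
    have h1 := ((fderiv ℝ (fderiv ℝ g) x) (auxE j)).le_opNorm (auxE i)
    have h2 := (fderiv ℝ (fderiv ℝ g) x).le_opNorm (auxE j)
    rw [hn, mul_one] at h1 h2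
    exact h1.trans h2
  let S : EuclideanSpace ℝ (Fin 3) → ℝ := fun ξ => (∑ i, ‖auxF (∂_{auxE i} u) ξ‖)
    + ∑ i, ∑ j, ‖auxF (∂_{auxE j} (∂_{auxE i} u)) ξ‖
  have hSm : ∀ v : SchwartzMap (EuclideanSpace ℝ (Fin 3)) ℂ,
      AEStronglyMeasurable (fun ξ => ‖v ξ‖) volume := fun v =>
    v.continuous.norm.aestronglyMeasurable
  have hSc : AEStronglyMeasurable S volume := by
    refine Continuous.aestronglyMeasurable ?_
    refine Continuous.add (continuous_finsetSum _ fun i _ => (SchwartzMap.continuous _).norm)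
      (continuous_finsetSum _ fun i _ => continuous_finsetSum _ fun j _ =>
        (SchwartzMap.continuous _).norm)
  have hS : eLpNorm S 2 volume ≤ 9 * (A + B) := by
    have s1 : eLpNorm (∑ i, fun ξ => ‖auxF (∂_{auxE i} u) ξ‖) 2 volume ≤ 3 * A := by
      refine (eLpNorm_sum_le (fun i _ => hSm _) (by norm_num)).trans ?_
      refine (Finset.sum_le_sum (g := fun _ => A) fun i _ => ?_).trans (by simp)
      rw [eLpNorm_norm]; exact b1 i
    have s2 : eLpNorm (∑ p : Fin 3 × Fin 3, fun ξ => ‖auxF (∂_{auxE p.2} (∂_{auxE p.1} u)) ξ‖)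
        2 volume ≤ 9 * B := by
      refine (eLpNorm_sum_le (fun i _ => hSm _) (by norm_num)).trans ?_
      refine (Finset.sum_le_sum (g := fun _ => B) fun i _ => ?_).trans (by simp)
      rw [eLpNorm_norm]; exact b2 i.1 i.2
    have e : S = (∑ i, fun ξ => ‖auxF (∂_{auxE i} u) ξ‖) +
        (∑ p : Fin 3 × Fin 3, fun ξ => ‖auxF (∂_{auxE p.2} (∂_{auxE p.1} u)) ξ‖) := by
      ext ξ
      simp only [S, Pi.add_apply, Finset.sum_apply, Fintype.sum_prod_type]
    rw [e]
    refine (eLpNorm_add_le (Finset.aestronglyMeasurable_sum _ fun i _ => hSm _)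
      (Finset.aestronglyMeasurable_sum _ fun i _ => hSm _) (by norm_num)).trans ?_
    refine (add_le_add s1 s2).trans ?_
    rw [mul_add]
    gcongr
    norm_num
  have hpt : ∀ ξ, ‖ξ‖ * (1 + ‖ξ‖) * ‖auxF u ξ‖ ≤ S ξ := fun ξ => by
    have h1 := aux_coord u ξ
    have h2 : ‖ξ‖ * (‖ξ‖ * ‖auxF u ξ‖) ≤ ∑ i, ∑ j, ‖auxF (∂_{auxE j} (∂_{auxE i} u)) ξ‖ := by
      refine (mul_le_mul_of_nonneg_left h1 (norm_nonneg ξ)).trans ?_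
      rw [Finset.mul_sum]
      exact Finset.sum_le_sum fun i _ => aux_coord (∂_{auxE i} u) ξ
    calc _ = ‖ξ‖ * ‖auxF u ξ‖ + ‖ξ‖ * (‖ξ‖ * ‖auxF u ξ‖) := by ring
      _ ≤ _ := add_le_add h1 h2
  have hL1 : eLpNorm (⇑(auxF u)) 1 volume ≤ W * (9 * (A + B)) := by
    have hwm : AEStronglyMeasurable (fun ξ : EuclideanSpace ℝ (Fin 3) => auxW ‖ξ‖) volume := by
      have hm : Measurable auxW := by unfold auxW; fun_prop
      exact (hm.comp measurable_norm).aestronglyMeasurable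
    have hh := eLpNorm_smul_le_mul_eLpNorm (p := 2) (q := 2) (r := 1) hSc hwm
    refine le_trans ?_ (hh.trans (mul_le_mul_right hS _))
    refine eLpNorm_mono_ae ?_
    have h0 : ∀ᵐ ξ : EuclideanSpace ℝ (Fin 3) ∂volume, ξ ≠ 0 := Measure.ae_ne volume 0
    filter_upwards [h0] with ξ hξ
    have hpos : 0 < ‖ξ‖ := norm_pos_iff.2 hξ
    have hw : 0 < ‖ξ‖ * (1 + ‖ξ‖) := by positivity
    simp only [Pi.smul_apply', smul_eq_mul, auxW]
    refine le_trans ?_ (le_abs_self _)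
    rw [inv_mul_eq_div, le_div_iff₀ hw, mul_comm]
    exact hpt ξ
  have hL1' : ENNReal.ofReal (∫ ξ, ‖auxF u ξ‖) ≤ W * (9 * (A + B)) := by
    rw [ofReal_integral_norm_eq_lintegral_enorm (SchwartzMap.integrable _),
      ← eLpNorm_one_eq_lintegral_enorm]
    exact hL1
  have hx : ∀ x, ‖g x‖ ≤ ∫ ξ, ‖auxF u ξ‖ := fun x => by
    have e : u = 𝓕⁻ (auxF u) := by simp [auxF]
    have e2 : ‖g x‖ = ‖u x‖ := (Complex.norm_real (g x)).symm
    rw [e2]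
    conv_lhs => rw [e, SchwartzMap.fourierInv_coe, Real.fourierInv_eq]
    refine (norm_integral_le_integral_norm _).trans (le_of_eq ?_)
    simp
  rw [eLpNorm_exponent_top]
  refine (eLpNormEssSup_le_of_ae_bound (ae_of_all _ hx)).trans (hL1'.trans (le_of_eq ?_))
  rw [ENNReal.coe_mul, ENNReal.coe_toNNReal hWt, mul_assoc]
  rfl

lemma aux_one {E F : Type*} [NormedAddCommGroup E] [NormedSpace ℝ E] [MeasurableSpace E]
    [NormedAddCommGroup F] [NormedSpace ℝ F] (f : E → F) (p : ℝ≥0∞) (μ : Measure E) :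
    eLpNorm (iteratedFDeriv ℝ 1 f) p μ = eLpNorm (fderiv ℝ f) p μ :=
  eLpNorm_congr_norm_ae (ae_of_all μ fun _ => norm_iteratedFDeriv_one f)

lemma aux_two {E F : Type*} [NormedAddCommGroup E] [NormedSpace ℝ E] [MeasurableSpace E]
    [NormedAddCommGroup F] [NormedSpace ℝ F] (f : E → F) (p : ℝ≥0∞) (μ : Measure E) :
    eLpNorm (iteratedFDeriv ℝ 2 f) p μ = eLpNorm (fderiv ℝ (fderiv ℝ f)) p μ := by
  have hpt : ∀ x, ‖iteratedFDeriv ℝ 2 f x‖ = ‖fderiv ℝ (fderiv ℝ f) x‖ := fun x => by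
    have h1 : ‖iteratedFDeriv ℝ 1 (fderiv ℝ f) x‖ = ‖iteratedFDeriv ℝ (1 + 1) f x‖ :=
      norm_iteratedFDeriv_fderiv
    have h2 : ‖iteratedFDeriv ℝ 1 (fderiv ℝ f) x‖ = ‖fderiv ℝ (fderiv ℝ f) x‖ :=
      norm_iteratedFDeriv_one (fderiv ℝ f)
    exact h1.symm.trans h2
  have h := eLpNorm_congr_norm_ae (p := p) (f := iteratedFDeriv ℝ 2 f)
    (g := fderiv ℝ (fderiv ℝ f)) (ae_of_all μ hpt)
  exact h

/-- There is `C > 0` such that all Schwartz `f, g : ℝ³ → ℝ` satisfy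
`‖fg‖_{H¹} ≤ C ‖f‖_{H¹} ‖∇g‖_{H¹}`. -/
theorem h1_norm_product_le :
    ∃ C : ℝ≥0, 0 < C ∧ ∀ f g : SchwartzMap (EuclideanSpace ℝ (Fin 3)) ℝ,
      eLpNorm (fun x => f x * g x) 2 volume
        + eLpNorm (iteratedFDeriv ℝ 1 fun x => f x * g x) 2 volume ≤
      (C : ℝ≥0∞) * (eLpNorm (⇑f) 2 volume + eLpNorm (iteratedFDeriv ℝ 1 ⇑f) 2 volume)
        * (eLpNorm (iteratedFDeriv ℝ 1 ⇑g) 2 volume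
            + eLpNorm (iteratedFDeriv ℝ 2 ⇑g) 2 volume) := by
  obtain ⟨K0, h0⟩ := aux_sup
  obtain ⟨K1, h1⟩ := aux_sobolev_six (F := ℝ)
  obtain ⟨K2, h2⟩ := aux_sobolev_six (F := EuclideanSpace ℝ (Fin 3) →L[ℝ] ℝ)
  refine ⟨K0 + K1 * (1 + K2) + 1, by positivity, fun f g => ?_⟩
  have hg0 := h0 g
  have hfe := aux_one (⇑f) 2 volume
  have hge := aux_one (⇑g) 2 volume
  have hge2 := aux_two (⇑g) 2 volume
  have hfge := aux_one (fun x => f x * g x) 2 volume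
  rw [hfe, hge, hge2, hfge]
  rw [hge, hge2] at hg0
  have hG : eLpNorm (fderiv ℝ ⇑g) 6 volume ≤ K2 * eLpNorm (fderiv ℝ (fderiv ℝ ⇑g)) 2 volume := by
    have e : ⇑(SchwartzMap.fderivCLM ℝ (EuclideanSpace ℝ (Fin 3)) ℝ g) = fderiv ℝ ⇑g := by
      ext1 x; exact SchwartzMap.fderivCLM_apply ℝ g x
    have h := h2 (SchwartzMap.fderivCLM ℝ (EuclideanSpace ℝ (Fin 3)) ℝ g)
    rw [e] at h
    exact h
  have hmf : AEStronglyMeasurable f volume := f.continuous.aestronglyMeasurable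
  have hmg : AEStronglyMeasurable g volume := g.continuous.aestronglyMeasurable
  have hmdf : AEStronglyMeasurable (fderiv ℝ f) volume :=
    ((f.smooth 1).continuous_fderiv one_ne_zero).aestronglyMeasurable
  have hmdg : AEStronglyMeasurable (fderiv ℝ g) volume :=
    ((g.smooth 1).continuous_fderiv one_ne_zero).aestronglyMeasurable
  have hG3 := aux_interp hmdg
  have hf6 := h1 f
  have p1 : eLpNorm (fun x => f x * g x) 2 volume
      ≤ eLpNorm g ∞ volume * eLpNorm f 2 volume := by
    have := eLpNorm_smul_le_mul_eLpNorm (p := ∞) (q := 2) (r := 2) hmf hmg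
    refine le_of_eq_of_le ?_ this
    congr 1
    ext x
    simp [mul_comm]
  have p2 : eLpNorm ((g : EuclideanSpace ℝ (Fin 3) → ℝ) • fderiv ℝ f) 2 volume
      ≤ eLpNorm g ∞ volume * eLpNorm (fderiv ℝ f) 2 volume :=
    eLpNorm_smul_le_mul_eLpNorm (p := ∞) (q := 2) (r := 2) hmdf hmg
  have : ENNReal.HolderTriple 6 3 2 := ⟨by
    rw [← ENNReal.toReal_eq_toReal_iff' (by finiteness) (by finiteness),
      ENNReal.toReal_add (by finiteness) (by finiteness)]
    simp [ENNReal.toReal_inv]; norm_num⟩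
  have p3 : eLpNorm ((f : EuclideanSpace ℝ (Fin 3) → ℝ) • fderiv ℝ g) 2 volume
      ≤ eLpNorm f 6 volume * eLpNorm (fderiv ℝ g) 3 volume :=
    eLpNorm_smul_le_mul_eLpNorm (p := 6) (q := 3) (r := 2) hmdg hmf
  have p4 : eLpNorm (fderiv ℝ fun x => f x * g x) 2 volume
      ≤ eLpNorm f 6 volume * eLpNorm (fderiv ℝ g) 3 volume
        + eLpNorm g ∞ volume * eLpNorm (fderiv ℝ f) 2 volume := by
    have e : (fderiv ℝ fun x => f x * g x)
        = (f : EuclideanSpace ℝ (Fin 3) → ℝ) • fderiv ℝ g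
          + (g : EuclideanSpace ℝ (Fin 3) → ℝ) • fderiv ℝ f := by
      ext1 x
      exact fderiv_fun_mul ((f.smooth 1).differentiable one_ne_zero x)
        ((g.smooth 1).differentiable one_ne_zero x)
    rw [e]
    exact (eLpNorm_add_le (hmf.smul hmdg) (hmg.smul hmdf) (by norm_num)).trans (add_le_add p3 p2)
  refine (add_le_add p1 p4).trans ?_
  set a := eLpNorm f 2 volume
  set b := eLpNorm (fderiv ℝ f) 2 volume
  set A := eLpNorm (fderiv ℝ g) 2 volume
  set B := eLpNorm (fderiv ℝ (fderiv ℝ g)) 2 volume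
  have q : eLpNorm (fderiv ℝ g) 3 volume ≤ (1 + K2) * (A + B) := by
    refine (hG3.trans (add_le_add le_rfl hG)).trans ?_
    calc A + K2 * B ≤ (A + K2 * B) + (B + K2 * A) := le_self_add
      _ = _ := by ring
  calc _ ≤ (K0 * (A + B)) * a + ((K1 * b) * ((1 + K2) * (A + B)) + (K0 * (A + B)) * b) := by
        gcongr
    _ ≤ ((K0 * (A + B)) * a + ((K1 * b) * ((1 + K2) * (A + B)) + (K0 * (A + B)) * b))
        + (K1 * a * ((1 + K2) * (A + B)) + (a + b) * (A + B)) := le_self_add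
    _ = _ := by push_cast; ring
end

section
/- There exists a constant C > 0 such that for every integer m with 1 ≤ m ≤ 2 and all Schwartz functions f, g : ℝ³ → ℝ one has ‖∇^m(fg)‖_{L²} ≤ C (‖∇f‖_{L²} + ‖∇²f‖_{L²}) (‖∇g‖_{L²} + ‖∇²g‖_{L²}). -/
open MeasureTheory
open scoped NNReal ENNReal

open scoped SchwartzMap FourierTransform LineDeriv

namespace DerivProd

abbrev E3 := EuclideanSpace ℝ (Fin 3)

noncomputable abbrev ee (i : Fin 3) : E3 := EuclideanSpace.single i (1 : ℝ)

lemma eLpNorm_le_sum {F : Type*} [NormedAddCommGroup F] {G : Type*} [NormedAddCommGroup G]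
    {ι : Type*} [Fintype ι] {p : ℝ≥0∞} (hp : 1 ≤ p) (f : E3 → F) (g : ι → E3 → G)
    (hg : ∀ i, AEStronglyMeasurable (g i) volume) (h : ∀ x, ‖f x‖ ≤ ∑ i, ‖g i x‖) :
    eLpNorm f p volume ≤ ∑ i, eLpNorm (g i) p volume := by
  calc eLpNorm f p volume ≤ eLpNorm (∑ i, fun x => ‖g i x‖) p volume :=
        eLpNorm_mono_real (fun x => by simpa using h x)
    _ ≤ ∑ i, eLpNorm (fun x => ‖g i x‖) p volume :=
        eLpNorm_sum_le (fun i _ => (hg i).norm) hp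
    _ = _ := by simp

lemma norm_le_sum_coord (v : E3) : ‖v‖ ≤ ∑ i, |v i| := by
  have : v = ∑ i, v i • ee i := by
    have := (EuclideanSpace.basisFun (Fin 3) ℝ).sum_repr v
    simpa using this.symm
  calc ‖v‖ = ‖∑ i, v i • ee i‖ := by rw [← this]
    _ ≤ ∑ i, ‖v i • ee i‖ := norm_sum_le _ _
    _ = _ := by simp [norm_smul]

lemma clm_norm_le {F : Type*} [NormedAddCommGroup F] [NormedSpace ℝ F] (L : E3 →L[ℝ] F) :
    ‖L‖ ≤ ∑ i, ‖L (ee i)‖ := by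
  refine L.opNorm_le_bound (by positivity) fun v => ?_
  have : v = ∑ i, v i • ee i := by
    have := (EuclideanSpace.basisFun (Fin 3) ℝ).sum_repr v
    simpa using this.symm
  calc ‖L v‖ = ‖∑ i, v i • L (ee i)‖ := by
        conv_lhs => rw [this]
        simp only [map_sum, map_smul]
    _ ≤ ∑ i, ‖v i • L (ee i)‖ := norm_sum_le _ _
    _ ≤ ∑ i, ‖L (ee i)‖ * ‖v‖ := by
        refine Finset.sum_le_sum fun i _ => ?_
        rw [norm_smul, mul_comm]
        gcongr
        exact PiLp.norm_apply_le v i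
    _ = _ := by rw [Finset.sum_mul]

lemma eLpNorm_fourier (h : 𝓢(E3, ℂ)) : eLpNorm (𝓕 h : 𝓢(E3, ℂ)) 2 volume = eLpNorm h 2 volume := by
  have := h.norm_fourier_toL2_eq
  rw [SchwartzMap.norm_toLp, SchwartzMap.norm_toLp] at this
  have h1 : eLpNorm (𝓕 h : 𝓢(E3, ℂ)) 2 volume ≠ ⊤ :=
    (SchwartzMap.eLpNorm_lt_top (𝓕 h : 𝓢(E3, ℂ)) 2 volume).ne
  have h2 : eLpNorm h 2 volume ≠ ⊤ := (SchwartzMap.eLpNorm_lt_top h 2 volume).ne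
  exact (ENNReal.toReal_eq_toReal_iff' h1 h2).1 this

lemma norm_fourier_deriv (h : 𝓢(E3, ℂ)) (i : Fin 3) (ξ : E3) :
    ‖𝓕 (∂_{ee i} h) ξ‖ = 2 * Real.pi * |ξ i| * ‖𝓕 h ξ‖ := by
  have : (fun x : E3 => inner ℝ x (ee i)).HasTemperateGrowth := by fun_prop
  rw [SchwartzMap.fourier_lineDerivOp_eq, smul_apply,
    SchwartzMap.smulLeftCLM_apply_apply this]
  simp [EuclideanSpace.inner_single_right, abs_of_pos Real.pi_pos]
  ring

lemma weight_pt (h : 𝓢(E3, ℂ)) (i : Fin 3) (ξ : E3) :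
    |ξ i| * ‖𝓕 h ξ‖ ≤ ‖𝓕 (∂_{ee i} h) ξ‖ := by
  rw [norm_fourier_deriv]
  have h1 : 1 ≤ 2 * Real.pi := by linarith [Real.pi_gt_three]
  have : 0 ≤ |ξ i| * ‖𝓕 h ξ‖ := by positivity
  nlinarith

lemma weight1 (h : 𝓢(E3, ℂ)) :
    eLpNorm (fun ξ => ‖ξ‖ * ‖𝓕 h ξ‖) 2 volume ≤ ∑ i, eLpNorm (∂_{ee i} h : 𝓢(E3, ℂ)) 2 volume := by
  simp_rw [← fun i => eLpNorm_fourier (∂_{ee i} h : 𝓢(E3, ℂ))]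
  refine eLpNorm_le_sum (by norm_num) _ _
    (fun i => (𝓕 (∂_{ee i} h)).continuous.aestronglyMeasurable) fun ξ => ?_
  rw [Real.norm_of_nonneg (by positivity)]
  calc _ ≤ (∑ i, |ξ i|) * ‖𝓕 h ξ‖ := by gcongr; exact norm_le_sum_coord ξ
    _ ≤ _ := by
      rw [Finset.sum_mul]
      exact Finset.sum_le_sum fun i _ => weight_pt h i ξ

lemma weight2 (h : 𝓢(E3, ℂ)) :
    eLpNorm (fun ξ => ‖ξ‖ ^ 2 * ‖𝓕 h ξ‖) 2 volume
      ≤ ∑ i, ∑ j, eLpNorm (∂_{ee j} (∂_{ee i} h) : 𝓢(E3, ℂ)) 2 volume := by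
  calc _ ≤ ∑ i, eLpNorm (fun ξ => ‖ξ‖ * ‖𝓕 (∂_{ee i} h) ξ‖) 2 volume := by
        refine eLpNorm_le_sum (by norm_num) _ _ (fun i =>
          (continuous_norm.mul (𝓕 (∂_{ee i} h)).continuous.norm).aestronglyMeasurable) fun ξ => ?_
        rw [Real.norm_of_nonneg (by positivity)]
        calc _ = ‖ξ‖ * (‖ξ‖ * ‖𝓕 h ξ‖) := by ring
          _ ≤ ‖ξ‖ * ((∑ i, |ξ i|) * ‖𝓕 h ξ‖) := by gcongr; exact norm_le_sum_coord ξ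
          _ ≤ _ := by
            rw [Finset.sum_mul, Finset.mul_sum]
            refine Finset.sum_le_sum fun i _ => ?_
            rw [Real.norm_of_nonneg (by positivity)]
            gcongr
            exact weight_pt h i ξ
    _ ≤ _ := Finset.sum_le_sum fun i _ => weight1 _

noncomputable def wt (ξ : E3) : ℝ := (‖ξ‖ + ‖ξ‖ ^ 2)⁻¹

lemma wt_memLp : MemLp wt 2 volume := by
  have hm : Measurable wt := by unfold wt; fun_prop
  rw [memLp_two_iff_integrable_sq hm.aestronglyMeasurable]
  have := (integrable_fun_norm_addHaar (E := E3) volume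
    (f := fun r : ℝ => ((r + r ^ 2)⁻¹) ^ 2)).2 ?_
  · exact this
  · simp only [finrank_euclideanSpace, Fintype.card_fin]
    refine (integrable_inv_one_add_sq.integrableOn (s := Set.Ioi 0)).mono' ?_ ?_
    · exact Measurable.aestronglyMeasurable (by fun_prop)
    · filter_upwards [self_mem_ae_restrict measurableSet_Ioi] with r (hr : 0 < r)
      rw [Real.norm_of_nonneg (by positivity)]
      simp only [Nat.add_one_sub_one, smul_eq_mul]
      have : r ^ 2 * ((r + r ^ 2)⁻¹) ^ 2 = ((1 + r) ^ 2)⁻¹ := by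
        field_simp
      rw [this]
      gcongr
      nlinarith

lemma sup_bound (h : 𝓢(E3, ℂ)) (x : E3) :
    ‖h x‖ₑ ≤ eLpNorm wt 2 volume * (∑ i, eLpNorm (∂_{ee i} h : 𝓢(E3, ℂ)) 2 volume
      + ∑ i, ∑ j, eLpNorm (∂_{ee j} (∂_{ee i} h) : 𝓢(E3, ℂ)) 2 volume) := by
  have h0 : ‖h x‖ₑ ≤ eLpNorm (𝓕 h : 𝓢(E3, ℂ)) 1 volume := by
    have h1 : h x = 𝓕⁻ (𝓕 h) x := by
      rw [FourierTransform.fourierInv_fourier_eq]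
    have h2 : ‖h x‖ ≤ ‖(𝓕 h).toLp 1‖ := by
      have := (𝓕 h).norm_fourier_apply_le_toLp_one (-x)
      rw [h1, SchwartzMap.fourierInv_apply_eq]
      simpa using this
    rw [SchwartzMap.norm_toLp] at h2
    rw [← ofReal_norm]
    exact ENNReal.ofReal_le_of_le_toReal h2
  have hH : eLpNorm (fun ξ => wt ξ * (‖ξ‖ * ‖𝓕 h ξ‖ + ‖ξ‖ ^ 2 * ‖𝓕 h ξ‖)) 1 volume
      ≤ (1 : ℝ≥0) * eLpNorm wt 2 volume *
        eLpNorm (fun ξ => ‖ξ‖ * ‖𝓕 h ξ‖ + ‖ξ‖ ^ 2 * ‖𝓕 h ξ‖) 2 volume := by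
    refine eLpNorm_le_eLpNorm_mul_eLpNorm_of_nnnorm wt_memLp.1
      (Continuous.aestronglyMeasurable ?_) (fun a b => a * b) 1 (by simp)
    have := (𝓕 h).continuous
    fun_prop
  have hA : eLpNorm (𝓕 h : 𝓢(E3, ℂ)) 1 volume
      ≤ eLpNorm (fun ξ => wt ξ * (‖ξ‖ * ‖𝓕 h ξ‖ + ‖ξ‖ ^ 2 * ‖𝓕 h ξ‖)) 1 volume := by
    refine eLpNorm_mono_ae ?_
    have : ∀ᵐ ξ : E3, ξ ≠ 0 := by simp [ae_iff]
    filter_upwards [this] with ξ hξ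
    have hp : 0 < ‖ξ‖ := norm_pos_iff.2 hξ
    have : wt ξ * (‖ξ‖ * ‖𝓕 h ξ‖ + ‖ξ‖ ^ 2 * ‖𝓕 h ξ‖) = ‖𝓕 h ξ‖ := by
      unfold wt; field_simp
    rw [this]; simp
  refine (h0.trans (hA.trans hH)).trans ?_
  simp only [ENNReal.coe_one, one_mul]
  gcongr
  have hc := (𝓕 h).continuous
  refine (eLpNorm_add_le (Continuous.aestronglyMeasurable (by fun_prop))
    (Continuous.aestronglyMeasurable (by fun_prop)) (by norm_num)).trans ?_
  gcongr
  · exact weight1 h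
  · exact weight2 h

/-- The norm sum on the right-hand side. -/
noncomputable def NN (f : 𝓢(E3, ℝ)) : ℝ≥0∞ :=
  eLpNorm (iteratedFDeriv ℝ 1 ⇑f) 2 volume + eLpNorm (iteratedFDeriv ℝ 2 ⇑f) 2 volume

lemma deriv1_le (f : 𝓢(E3, ℝ)) (i : Fin 3) :
    eLpNorm (∂_{ee i} f : 𝓢(E3, ℝ)) 2 volume ≤ eLpNorm (iteratedFDeriv ℝ 1 ⇑f) 2 volume := by
  refine eLpNorm_mono fun x => ?_
  rw [norm_iteratedFDeriv_one, SchwartzMap.lineDerivOp_apply_eq_fderiv]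
  simpa using (fderiv ℝ f x).le_opNorm (ee i)

lemma deriv2_le (f : 𝓢(E3, ℝ)) (i j : Fin 3) :
    eLpNorm (∂_{ee j} (∂_{ee i} f) : 𝓢(E3, ℝ)) 2 volume ≤ eLpNorm (iteratedFDeriv ℝ 2 ⇑f) 2 volume := by
  refine eLpNorm_mono fun x => ?_
  have : ∂_{ee j} (∂_{ee i} f) x = iteratedFDeriv ℝ 2 f x ![ee j, ee i] := by
    rw [← SchwartzMap.iteratedLineDerivOp_eq_iteratedFDeriv]
    simp [LineDeriv.iteratedLineDerivOp_succ_left]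
  rw [this]
  simpa [Fin.prod_univ_succ] using (iteratedFDeriv ℝ 2 f x).le_opNorm ![ee j, ee i]

noncomputable def cx (f : 𝓢(E3, ℝ)) : 𝓢(E3, ℂ) := f.postcompCLM Complex.ofRealCLM

lemma cx_deriv (f : 𝓢(E3, ℝ)) (v : E3) : ∂_{v} (cx f) = cx (∂_{v} f) := by
  ext x
  have h1 : HasFDerivAt (cx f) (Complex.ofRealCLM ∘L fderiv ℝ f x) x :=
    Complex.ofRealCLM.hasFDerivAt.comp x (f.hasFDerivAt x)
  rw [SchwartzMap.lineDerivOp_apply_eq_fderiv, h1.fderiv]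
  rfl

lemma cx_eLpNorm (f : 𝓢(E3, ℝ)) : eLpNorm (cx f) 2 volume = eLpNorm f 2 volume :=
  eLpNorm_congr_norm_ae (.of_forall fun x => by simp [cx])

lemma sup_real : ∃ K : ℝ≥0, ∀ (f : 𝓢(E3, ℝ)) (x : E3), ‖f x‖ₑ ≤ K * NN f := by
  refine ⟨(eLpNorm wt 2 volume).toNNReal * 9, fun f x => ?_⟩
  have := sup_bound (cx f) x
  simp only [cx_deriv, cx_eLpNorm] at this
  have h1 : ‖cx f x‖ₑ = ‖f x‖ₑ := by
    simp [cx, enorm_eq_nnnorm]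
  rw [h1] at this
  refine this.trans ?_
  rw [ENNReal.coe_mul, ENNReal.coe_toNNReal wt_memLp.eLpNorm_ne_top, mul_assoc]
  gcongr
  calc _ ≤ ∑ _i : Fin 3, eLpNorm (iteratedFDeriv ℝ 1 ⇑f) 2 volume +
        ∑ _i : Fin 3, ∑ _j : Fin 3, eLpNorm (iteratedFDeriv ℝ 2 ⇑f) 2 volume := by
        gcongr
        · exact deriv1_le f _
        · exact deriv2_le f _ _
    _ = 3 * eLpNorm (iteratedFDeriv ℝ 1 ⇑f) 2 volume
        + 9 * eLpNorm (iteratedFDeriv ℝ 2 ⇑f) 2 volume := by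
        simp [← mul_assoc]; norm_num
    _ ≤ 9 * eLpNorm (iteratedFDeriv ℝ 1 ⇑f) 2 volume
        + 9 * eLpNorm (iteratedFDeriv ℝ 2 ⇑f) 2 volume := by
        gcongr; norm_num
    _ = _ := by rw [NN, mul_add]; rfl

lemma L4_real (f : 𝓢(E3, ℝ)) (v : E3) (M : ℝ) (hM : ∀ x, |f x| ≤ M) :
    ∫ x, (∂_{v} f x) ^ 4 ≤ 9 * M ^ 2 * ∫ x, (∂_{v} (∂_{v} f) x) ^ 2 := by
  set u := ∂_{v} f with hu
  let B := ContinuousLinearMap.mul ℝ ℝ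
  let u2 : 𝓢(E3, ℝ) := SchwartzMap.pairing B u u
  let u3 : 𝓢(E3, ℝ) := SchwartzMap.pairing B u2 u
  have hu3 : ∀ x, ∂_{v} u3 x = 3 * (u x) ^ 2 * ∂_{v} u x := by
    intro x
    have h1 : HasFDerivAt (fun y => u y ^ 3) _ x := (u.hasFDerivAt x).pow 3
    have h2 : ⇑u3 = fun y => u y ^ 3 := by
      ext y; simp [u3, u2, B]; ring
    rw [SchwartzMap.lineDerivOp_apply_eq_fderiv v u3, h2, h1.fderiv,
      SchwartzMap.lineDerivOp_apply_eq_fderiv v u]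
    simp only [smul_apply, smul_eq_mul, nsmul_eq_mul]
    norm_num
  have ibp := SchwartzMap.integral_mul_lineDerivOp_right_eq_neg_left (μ := volume) u3 f v
  have e1 : ∀ x, u3 x * ∂_{v} f x = u x ^ 4 := by
    intro x; rw [← hu]; simp [u3, u2, B]; ring
  simp_rw [e1, hu3] at ibp
  have i4 : Integrable (fun x => u x ^ 4) volume := by
    refine (SchwartzMap.pairing B u3 u).integrable.congr (.of_forall fun x => ?_)
    simp [u3, u2, B]; ring
  have i2 : Integrable (fun x => (∂_{v} u x) ^ 2) volume := by
    refine (SchwartzMap.pairing B (∂_{v} u) (∂_{v} u)).integrable.congr (.of_forall fun x => ?_)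
    simp [B]; ring
  have i3 : Integrable (fun x => 3 * u x ^ 2 * ∂_{v} u x * f x) volume := by
    refine (SchwartzMap.pairing B (∂_{v} u3) f).integrable.congr (.of_forall fun x => ?_)
    simp only [SchwartzMap.pairing_apply_apply, hu3, B, ContinuousLinearMap.mul_apply']
  have key : ∫ x, u x ^ 4 ≤ ∫ x, ((1/2) * u x ^ 4 + (9/2 * M ^ 2) * (∂_{v} u x) ^ 2) := by
    rw [ibp, ← integral_neg]
    refine integral_mono i3.neg ((i4.const_mul _).add (i2.const_mul _)) fun x => ?_
    set a := u x
    set b := ∂_{v} u x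
    have h1 := abs_le.1 (hM x)
    have h2 : (f x) ^ 2 ≤ M ^ 2 := sq_le_sq' h1.1 h1.2
    have h3 : (f x) ^ 2 * b ^ 2 ≤ M ^ 2 * b ^ 2 := by gcongr
    change -(3 * a ^ 2 * b * f x) ≤ 1 / 2 * a ^ 4 + 9 / 2 * M ^ 2 * b ^ 2
    nlinarith [sq_nonneg (a ^ 2 + 3 * f x * b)]
  rw [integral_add (i4.const_mul _) (i2.const_mul _), integral_const_mul, integral_const_mul] at key
  linarith

lemma eLpNorm_pow_nat (u : 𝓢(E3, ℝ)) (n : ℕ) (hn : n ≠ 0) (he : Even n) :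
    eLpNorm u n volume ^ n = ENNReal.ofReal (∫ x, (u x) ^ n) := by
  have h := (u.memLp n volume).eLpNorm_eq_integral_rpow_norm (by simpa using hn) (by simp)
  rw [h, ← ENNReal.ofReal_pow (by positivity)]
  congr 1
  simp only [ENNReal.toReal_natCast, Real.rpow_natCast]
  rw [Real.rpow_inv_natCast_pow (by positivity) hn]
  simp [he.pow_abs]

lemma L4_bound (K : ℝ≥0) (hK : ∀ (f : 𝓢(E3, ℝ)) (x : E3), ‖f x‖ₑ ≤ K * NN f)
    (f : 𝓢(E3, ℝ)) (i : Fin 3) :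
    eLpNorm (∂_{ee i} f : 𝓢(E3, ℝ)) 4 volume ≤ (3 * (K + 1) : ℝ≥0) * NN f := by
  by_cases hN : NN f = ⊤
  · rw [hN, ENNReal.mul_top]
    · exact le_top
    · simp
  have hKN : (K : ℝ≥0∞) * NN f ≠ ⊤ := ENNReal.mul_ne_top ENNReal.coe_ne_top hN
  set M := ((K : ℝ≥0∞) * NN f).toReal with hM
  have hb : ∀ x, |f x| ≤ M := by
    intro x
    have := ENNReal.toReal_mono hKN (hK f x)
    simpa [hM] using this
  have h := L4_real f (ee i) M hb
  have h4 := eLpNorm_pow_nat (∂_{ee i} f) 4 (by norm_num) (by decide)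
  have h2 := eLpNorm_pow_nat (∂_{ee i} (∂_{ee i} f)) 2 (by norm_num) (by decide)
  have hpow : eLpNorm (∂_{ee i} f : 𝓢(E3, ℝ)) 4 volume ^ 4
      ≤ ((3 * (K + 1) : ℝ≥0) * NN f) ^ 4 := by
    calc _ = ENNReal.ofReal (∫ x, (∂_{ee i} f x) ^ 4) := by exact_mod_cast h4
      _ ≤ ENNReal.ofReal (9 * M ^ 2 * ∫ x, (∂_{ee i} (∂_{ee i} f) x) ^ 2) :=
          ENNReal.ofReal_le_ofReal h
      _ = 9 * (K * NN f) ^ 2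
          * eLpNorm (∂_{ee i} (∂_{ee i} f) : 𝓢(E3, ℝ)) 2 volume ^ 2 := by
          rw [ENNReal.ofReal_mul (by positivity), ENNReal.ofReal_mul (by positivity),
            ENNReal.ofReal_pow (by positivity), hM, ENNReal.ofReal_toReal hKN, ← h2]
          simp
      _ ≤ 9 * (K * NN f) ^ 2 * (NN f) ^ 2 := by
          gcongr
          exact (deriv2_le f i i).trans le_add_self
      _ = (9 * K ^ 2 : ℝ≥0) * NN f ^ 4 := by
          push_cast; ring
      _ ≤ ((3 * (K + 1)) ^ 4 : ℝ≥0) * NN f ^ 4 := by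
          gcongr
          have h1 : (1 : ℝ≥0) ≤ (K + 1) ^ 2 := one_le_pow₀ (by simp)
          calc (9 : ℝ≥0) * K ^ 2 ≤ 81 * ((K + 1) ^ 2 * 1) := by
                rw [mul_one]; gcongr
                · norm_num
                · simp
            _ ≤ 81 * ((K + 1) ^ 2 * (K + 1) ^ 2) := by gcongr
            _ = _ := by ring
      _ = _ := by rw [mul_pow]; push_cast; ring
  exact (ENNReal.pow_le_pow_left_iff (by norm_num)).1 hpow

lemma L4_grad (K : ℝ≥0) (hK : ∀ (f : 𝓢(E3, ℝ)) (x : E3), ‖f x‖ₑ ≤ K * NN f)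
    (f : 𝓢(E3, ℝ)) :
    eLpNorm (iteratedFDeriv ℝ 1 ⇑f) 4 volume ≤ (9 * (K + 1) : ℝ≥0) * NN f := by
  calc _ ≤ ∑ i, eLpNorm (∂_{ee i} f : 𝓢(E3, ℝ)) 4 volume := by
        refine eLpNorm_le_sum (by norm_num) _ _
          (fun i => (∂_{ee i} f : 𝓢(E3, ℝ)).continuous.aestronglyMeasurable) fun x => ?_
        rw [norm_iteratedFDeriv_one]
        exact clm_norm_le _
    _ ≤ ∑ _i : Fin 3, (3 * (K + 1) : ℝ≥0) * NN f :=
        Finset.sum_le_sum fun i _ => L4_bound K hK f i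
    _ = _ := by
        simp only [Finset.sum_const, Finset.card_univ, Fintype.card_fin, nsmul_eq_mul]
        push_cast
        ring

lemma aesm (f : 𝓢(E3, ℝ)) (n : ℕ) :
    AEStronglyMeasurable (iteratedFDeriv ℝ n ⇑f) volume :=
  ((f.smooth ⊤).continuous_iteratedFDeriv (by exact_mod_cast le_top)).aestronglyMeasurable

lemma prod_bound (f g : 𝓢(E3, ℝ)) (i j : ℕ) (p q : ℝ≥0∞) [ENNReal.HolderTriple p q 2] :
    eLpNorm (fun x => ‖iteratedFDeriv ℝ i f x‖ * ‖iteratedFDeriv ℝ j g x‖) 2 volume ≤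
      eLpNorm (iteratedFDeriv ℝ i f) p volume * eLpNorm (iteratedFDeriv ℝ j g) q volume := by
  have := eLpNorm_le_eLpNorm_mul_eLpNorm_of_nnnorm (p := p) (q := q) (r := 2) (aesm f i) (aesm g j)
    (fun a b => ‖a‖ * ‖b‖) 1 (by simp)
  simpa using this

lemma sup_norm (K : ℝ≥0) (hK : ∀ (f : 𝓢(E3, ℝ)) (x : E3), ‖f x‖ₑ ≤ K * NN f)
    (f : 𝓢(E3, ℝ)) :
    eLpNorm (iteratedFDeriv ℝ 0 ⇑f) ∞ volume ≤ K * NN f := by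
  have : eLpNorm (iteratedFDeriv ℝ 0 ⇑f) ∞ volume = eLpNorm f ∞ volume :=
    eLpNorm_congr_norm_ae (.of_forall fun x => by simp)
  rw [this, eLpNorm_exponent_top]
  exact eLpNormEssSup_le_of_ae_enorm_bound (.of_forall (hK f))

lemma bound_left (K : ℝ≥0) (hK : ∀ (f : 𝓢(E3, ℝ)) (x : E3), ‖f x‖ₑ ≤ K * NN f)
    (f g : 𝓢(E3, ℝ)) (j : ℕ) (hj : eLpNorm (iteratedFDeriv ℝ j g) 2 volume ≤ NN g) :
    eLpNorm (fun x => ‖iteratedFDeriv ℝ 0 f x‖ * ‖iteratedFDeriv ℝ j g x‖) 2 volume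
      ≤ K * (NN f * NN g) := by
  refine (prod_bound f g 0 j ∞ 2).trans ?_
  rw [← mul_assoc]
  gcongr
  exact sup_norm K hK f

lemma bound_right (K : ℝ≥0) (hK : ∀ (f : 𝓢(E3, ℝ)) (x : E3), ‖f x‖ₑ ≤ K * NN f)
    (f g : 𝓢(E3, ℝ)) (j : ℕ) (hj : eLpNorm (iteratedFDeriv ℝ j f) 2 volume ≤ NN f) :
    eLpNorm (fun x => ‖iteratedFDeriv ℝ j f x‖ * ‖iteratedFDeriv ℝ 0 g x‖) 2 volume
      ≤ K * (NN f * NN g) := by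
  simp_rw [mul_comm ‖iteratedFDeriv ℝ j f _‖]
  rw [mul_comm (NN f)]
  exact bound_left K hK g f j hj

lemma bound_mid (K : ℝ≥0) (hK : ∀ (f : 𝓢(E3, ℝ)) (x : E3), ‖f x‖ₑ ≤ K * NN f)
    (f g : 𝓢(E3, ℝ)) :
    eLpNorm (fun x => ‖iteratedFDeriv ℝ 1 f x‖ * ‖iteratedFDeriv ℝ 1 g x‖) 2 volume
      ≤ ((9 * (K + 1)) ^ 2 : ℝ≥0) * (NN f * NN g) := by
  have : ENNReal.HolderTriple 4 4 2 := ⟨by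
    rw [← two_mul, show (4 : ℝ≥0∞) = 2 * 2 by norm_num,
      ENNReal.mul_inv (by simp) (by simp), ← mul_assoc,
      ENNReal.mul_inv_cancel (by simp) (by simp), one_mul]⟩
  refine (prod_bound f g 1 1 4 4).trans ?_
  refine (mul_le_mul' (L4_grad K hK f) (L4_grad K hK g)).trans (le_of_eq ?_)
  push_cast
  ring

end DerivProd

open DerivProd in
/-- There is `C > 0` such that for every integer `1 ≤ m ≤ 2` and all Schwartz `f, g : ℝ³ → ℝ`,
`‖∇^m(fg)‖_{L²} ≤ C (‖∇f‖_{L²} + ‖∇²f‖_{L²}) (‖∇g‖_{L²} + ‖∇²g‖_{L²})`. -/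
theorem deriv_product_L2_le :
    ∃ C : ℝ≥0, 0 < C ∧ ∀ m : ℕ, 1 ≤ m → m ≤ 2 →
      ∀ f g : SchwartzMap (EuclideanSpace ℝ (Fin 3)) ℝ,
        eLpNorm (iteratedFDeriv ℝ m fun x => f x * g x) 2 volume ≤
          (C : ℝ≥0∞)
            * (eLpNorm (iteratedFDeriv ℝ 1 ⇑f) 2 volume
                + eLpNorm (iteratedFDeriv ℝ 2 ⇑f) 2 volume)
            * (eLpNorm (iteratedFDeriv ℝ 1 ⇑g) 2 volume
                + eLpNorm (iteratedFDeriv ℝ 2 ⇑g) 2 volume) := by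
  obtain ⟨K, hK⟩ := sup_real
  refine ⟨2 * K + 2 * (9 * (K + 1)) ^ 2, by positivity, fun m hm1 hm2 f g => ?_⟩
  have hf1 : eLpNorm (iteratedFDeriv ℝ 1 f) 2 volume ≤ NN f := le_self_add
  have hf2 : eLpNorm (iteratedFDeriv ℝ 2 f) 2 volume ≤ NN f := le_add_self
  have hg1 : eLpNorm (iteratedFDeriv ℝ 1 g) 2 volume ≤ NN g := le_self_add
  have hg2 : eLpNorm (iteratedFDeriv ℝ 2 g) 2 volume ≤ NN g := le_add_self
  rw [mul_assoc]
  change _ ≤ _ * (NN f * NN g)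
  have hL : ∀ x, ‖iteratedFDeriv ℝ m (fun x => f x * g x) x‖ ≤ ∑ i ∈ Finset.range (m + 1),
      (m.choose i : ℝ) * ‖iteratedFDeriv ℝ i f x‖ * ‖iteratedFDeriv ℝ (m - i) g x‖ := fun x =>
    norm_iteratedFDeriv_mul_le (f.smooth ⊤) (g.smooth ⊤) x (by exact_mod_cast le_top)
  have hsm : ∀ i j, AEStronglyMeasurable
      (fun x => ‖iteratedFDeriv ℝ i f x‖ * ‖iteratedFDeriv ℝ j g x‖) volume :=
    fun i j => (aesm f i).norm.mul (aesm g j).norm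
  have hmain : eLpNorm (iteratedFDeriv ℝ m fun x => f x * g x) 2 volume ≤
      ∑ i ∈ Finset.range (m + 1), (m.choose i : ℝ≥0∞) *
        eLpNorm (fun x => ‖iteratedFDeriv ℝ i f x‖ * ‖iteratedFDeriv ℝ (m - i) g x‖) 2 volume := by
    calc _ ≤ eLpNorm (∑ i ∈ Finset.range (m + 1), (m.choose i : ℝ) •
          fun x => ‖iteratedFDeriv ℝ i f x‖ * ‖iteratedFDeriv ℝ (m - i) g x‖) 2 volume :=
          eLpNorm_mono_real fun x => by simpa [mul_assoc] using hL x
      _ ≤ _ := eLpNorm_sum_le (fun i _ => (hsm i (m - i)).const_smul _) (by norm_num)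
      _ = _ := by
        refine Finset.sum_congr rfl fun i _ => ?_
        rw [eLpNorm_const_smul, Real.enorm_natCast]
  refine hmain.trans ?_
  obtain rfl | rfl : m = 1 ∨ m = 2 := by omega
  · simp only [Finset.sum_range_succ, Finset.sum_range_zero, zero_add, Nat.choose_zero_right,
      Nat.choose_self, Nat.choose_one_right, Nat.cast_one, one_mul, Nat.cast_ofNat]
    refine (add_le_add (bound_left K hK f g 1 hg1) (bound_right K hK f g 1 hf1)).trans ?_
    rw [← two_mul, ← mul_assoc]
    gcongr
    push_cast
    exact le_self_add
  · simp only [Finset.sum_range_succ, Finset.sum_range_zero, zero_add, Nat.choose_zero_right,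
      Nat.choose_self, Nat.choose_one_right, Nat.cast_one, one_mul, Nat.cast_ofNat]
    refine (add_le_add (add_le_add (bound_left K hK f g 2 hg2)
      (mul_le_mul_right (bound_mid K hK f g) 2)) (bound_right K hK f g 2 hf2)).trans (le_of_eq ?_)
    push_cast
    ring
end

section
/- Let k ≥ 0 be an integer and let r, r₁, r₂, r₃, r₄ be exponents with 1 < r, r₂, r₄ < ∞, 1 ≤ r₁, r₃ ≤ ∞, and 1/r₁ + 1/r₂ = 1/r₃ + 1/r₄ = 1/r. Then there exists a constant C > 0 such that for all Schwartz functions g, h : ℝ³ → ℝ one has ‖∇^k(gh)‖_{L^r} ≤ C ‖g‖_{L^{r₁}} ‖∇^k h‖_{L^{r₂}} + C ‖h‖_{L^{r₃}} ‖∇^k g‖_{L^{r₄}}. -/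
open MeasureTheory
open scoped NNReal ENNReal

/-- The underlying Euclidean space. -/
abbrev VV := EuclideanSpace ℝ (Fin 3)

/-- Uncentered Hardy-Littlewood maximal function. -/
noncomputable def MF (u : VV → ℝ≥0∞) (x : VV) : ℝ≥0∞ :=
  ⨆ (c : VV) (ρ : ℝ) (_ : x ∈ Metric.ball c ρ),
    (∫⁻ y in Metric.ball c ρ, u y) / volume (Metric.ball c ρ)

lemma lt_MF_iff (u : VV → ℝ≥0∞) (x : VV) (l : ℝ≥0∞) :
    l < MF u x ↔ ∃ c : VV, ∃ ρ : ℝ, x ∈ Metric.ball c ρ ∧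
      l < (∫⁻ y in Metric.ball c ρ, u y) / volume (Metric.ball c ρ) := by
  simp only [MF, lt_iSup_iff, exists_prop]

lemma isOpen_MF (u : VV → ℝ≥0∞) (l : ℝ≥0∞) : IsOpen {x | l < MF u x} := by
  rw [isOpen_iff_mem_nhds]
  intro x hx
  obtain ⟨c, ρ, hx1, h⟩ := (lt_MF_iff u x l).1 hx
  filter_upwards [Metric.isOpen_ball.mem_nhds hx1] with y hy
  exact (lt_MF_iff u y l).2 ⟨c, ρ, hy, h⟩

lemma measurable_MF (u : VV → ℝ≥0∞) : Measurable (MF u) :=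
  measurable_of_Ioi fun l => (isOpen_MF u l).measurableSet

lemma avg_le_MF (u : VV → ℝ≥0∞) (c x : VV) (ρ : ℝ) (h : x ∈ Metric.ball c ρ) :
    ∫⁻ y in Metric.ball c ρ, u y ≤ volume (Metric.ball c ρ) * MF u x := by
  have hρ : 0 < ρ := Metric.pos_of_mem_ball h
  have h1 : (∫⁻ y in Metric.ball c ρ, u y) / volume (Metric.ball c ρ) ≤ MF u x := by
    unfold MF
    exact le_iSup_of_le c (le_iSup_of_le ρ (le_iSup_of_le h le_rfl))
  rw [ENNReal.div_le_iff (Metric.measure_ball_pos volume c hρ).ne' measure_ball_lt_top.ne] at h1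
  rwa [mul_comm]

lemma MF_le_add (u w : VV → ℝ≥0∞) (B : ℝ≥0∞) (h : ∀ x, u x ≤ w x + B)
    (x : VV) : MF u x ≤ MF w x + B := by
  unfold MF
  refine iSup_le fun c => iSup_le fun ρ => iSup_le fun hx => ?_
  have hρ : 0 < ρ := Metric.pos_of_mem_ball hx
  have h1 := avg_le_MF w c x ρ hx
  change _ ≤ MF w x + B
  rw [ENNReal.div_le_iff (Metric.measure_ball_pos volume c hρ).ne' measure_ball_lt_top.ne]
  calc ∫⁻ y in Metric.ball c ρ, u y ≤ ∫⁻ y in Metric.ball c ρ, (w y + B) := lintegral_mono h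
    _ = (∫⁻ y in Metric.ball c ρ, w y) + B * volume (Metric.ball c ρ) := by
        rw [lintegral_add_right _ measurable_const]; simp
    _ ≤ _ := by
        rw [add_mul, mul_comm (MF w x)]; gcongr

lemma MF_zero (x : VV) : MF (fun _ => 0) x = 0 := by
  simp [MF]

lemma MF_le_const (u : VV → ℝ≥0∞) (B : ℝ≥0∞) (h : ∀ x, u x ≤ B) (x : VV) : MF u x ≤ B := by
  have := MF_le_add u (fun _ => 0) B (by simpa using h) x
  simpa [MF_zero] using this

lemma MF_le_essSup (u : VV → ℝ≥0∞) (x : VV) : MF u x ≤ essSup u volume := by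
  unfold MF
  refine iSup_le fun c => iSup_le fun ρ => iSup_le fun hx => ?_
  have hρ : 0 < ρ := Metric.pos_of_mem_ball hx
  rw [ENNReal.div_le_iff (Metric.measure_ball_pos volume c hρ).ne' measure_ball_lt_top.ne]
  calc ∫⁻ y in Metric.ball c ρ, u y ≤ ∫⁻ y in Metric.ball c ρ, essSup u volume :=
        lintegral_mono_ae (ae_restrict_of_ae (ENNReal.ae_le_essSup u))
    _ = _ := by simp

lemma vol_ball (c : VV) {ρ : ℝ} (hρ : 0 < ρ) :
    volume (Metric.ball c ρ) = ENNReal.ofReal (ρ ^ 3) * volume (Metric.ball (0 : VV) 1) := by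
  rw [Measure.addHaar_ball_of_pos volume c hρ]; simp

lemma vol_ball_mul (c c' : VV) {ρ a : ℝ} (hρ : 0 < ρ) (ha : 0 < a) :
    volume (Metric.ball c (a * ρ)) = ENNReal.ofReal (a ^ 3) * volume (Metric.ball c' ρ) := by
  rw [vol_ball c (by positivity), vol_ball c' hρ, mul_pow, ENNReal.ofReal_mul (by positivity),
    mul_assoc]

lemma MF_weak (u : VV → ℝ≥0∞) (l : ℝ≥0∞) (hl : l ≠ 0) (hl' : l ≠ ⊤) :
    l * volume {x | l < MF u x} ≤ 64 * ∫⁻ y, u y := by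
  by_cases hI : ∫⁻ y, u y = ⊤
  · simp [hI]
  let t : Set (VV × ℝ) := {q | 0 < q.2 ∧
    l < (∫⁻ y in Metric.ball q.1 q.2, u y) / volume (Metric.ball q.1 q.2)}
  have key : ∀ q ∈ t, l * volume (Metric.ball q.1 q.2) ≤ ∫⁻ y in Metric.ball q.1 q.2, u y := by
    rintro ⟨c, ρ⟩ ⟨h1, h2⟩
    exact ENNReal.mul_le_of_le_div h2.le
  set ω := volume (Metric.ball (0 : VV) 1) with hω
  have hω0 : ω ≠ 0 := (Metric.measure_ball_pos volume _ one_pos).ne'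
  have hωt : ω ≠ ⊤ := measure_ball_lt_top.ne
  obtain ⟨R, hR⟩ : ∃ R : ℝ, ∀ q ∈ t, q.2 ≤ R := by
    refine ⟨max 1 ((∫⁻ y, u y) / (l * ω)).toReal, fun q hq => ?_⟩
    by_contra! hcon
    have h1 : 1 < q.2 := (le_max_left _ _).trans_lt hcon
    have h2 : ((∫⁻ y, u y) / (l * ω)).toReal < q.2 := (le_max_right _ _).trans_lt hcon
    have h3 := (key q hq).trans (setLIntegral_le_lintegral _ _)
    rw [vol_ball _ hq.1] at h3
    have h4 : ENNReal.ofReal (q.2 ^ 3) ≤ (∫⁻ y, u y) / (l * ω) := by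
      rw [ENNReal.le_div_iff_mul_le (Or.inl (mul_ne_zero hl hω0))
        (Or.inl (ENNReal.mul_ne_top hl' hωt))]
      calc _ = l * (ENNReal.ofReal (q.2 ^ 3) * ω) := by ring
        _ ≤ _ := h3
    have h5 : (∫⁻ y, u y) / (l * ω) ≠ ⊤ := ENNReal.div_ne_top hI (mul_ne_zero hl hω0)
    rw [ENNReal.ofReal_le_iff_le_toReal h5] at h4
    nlinarith [mul_pos (sub_pos.2 h1) (sub_pos.2 h1), sq_nonneg q.2]
  obtain ⟨v, hvt, hdis, hcov⟩ := Vitali.exists_disjoint_subfamily_covering_enlargement_ball t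
    (fun q => q.1) (fun q => q.2) R hR 4 (by norm_num)
  have hvc : v.Countable := hdis.countable_of_isOpen (fun _ _ => Metric.isOpen_ball)
    (fun q hq => Metric.nonempty_ball.2 (hvt hq).1)
  have hsub : {x | l < MF u x} ⊆ ⋃ q ∈ v, Metric.ball q.1 (4 * q.2) := by
    intro x hx
    obtain ⟨c, ρ, hx1, h⟩ := (lt_MF_iff u x l).1 hx
    obtain ⟨b, hb, hsb⟩ := hcov (c, ρ) ⟨Metric.pos_of_mem_ball hx1, h⟩
    simp only [Set.mem_iUnion]
    exact ⟨b, hb, hsb hx1⟩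
  have := hvc.to_subtype
  calc l * volume {x | l < MF u x} ≤ l * ∑' q : v, volume (Metric.ball q.1.1 (4 * q.1.2)) := by
        gcongr
        exact (measure_mono hsub).trans (measure_biUnion_le volume hvc _)
    _ = 64 * ∑' q : v, l * volume (Metric.ball q.1.1 q.1.2) := by
        rw [← ENNReal.tsum_mul_left, ← ENNReal.tsum_mul_left]
        refine tsum_congr fun q => ?_
        rw [vol_ball_mul q.1.1 q.1.1 (hvt q.2).1 (by norm_num)]
        norm_num
        ring
    _ ≤ 64 * ∑' q : v, ∫⁻ y in Metric.ball q.1.1 q.1.2, u y := by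
        gcongr with q
        exact key _ (hvt q.2)
    _ = 64 * ∫⁻ y in ⋃ q ∈ v, Metric.ball q.1 q.2, u y := by
        rw [lintegral_biUnion hvc (fun _ _ => Metric.isOpen_ball.measurableSet) hdis]
    _ ≤ _ := by gcongr; exact Measure.restrict_le_self

lemma MF_strong (p : ℝ) (hp : 1 < p) : ∃ C : ℝ≥0, ∀ u : VV → ℝ≥0∞, Measurable u →
    ∀ B : ℝ≥0, (∀ x, u x ≤ B) → ∫⁻ x, (MF u x) ^ p ≤ C * ∫⁻ x, (u x) ^ p := by
  let C' : ℝ≥0∞ := ENNReal.ofReal p * (128 * ((ENNReal.ofReal (p - 1))⁻¹ * 2 ^ (p - 1)))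
  have hC' : C' ≠ ⊤ := by
    have : (0:ℝ) < p - 1 := by linarith
    refine ENNReal.mul_ne_top (by simp) (ENNReal.mul_ne_top (by simp) (ENNReal.mul_ne_top ?_ ?_))
    · simpa using hp
    · exact ENNReal.rpow_ne_top_of_nonneg this.le (by simp)
  refine ⟨C'.toNNReal, fun u hu B hB => ?_⟩
  rw [ENNReal.coe_toNNReal hC']
  have hp0 : 0 < p := by linarith
  have hp1 : 0 < p - 1 := by linarith
  have hMf : ∀ x, MF u x ≠ ⊤ := fun x => ((MF_le_const u B hB x).trans_lt (by simp)).ne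
  have huf : ∀ x, u x ≠ ⊤ := fun x => ((hB x).trans_lt (by simp)).ne
  have e1 : ∀ x, (MF u x) ^ p = ENNReal.ofReal ((MF u x).toReal ^ p) := fun x => by
    rw [← ENNReal.ofReal_rpow_of_nonneg ENNReal.toReal_nonneg hp0.le, ENNReal.ofReal_toReal (hMf x)]
  simp_rw [e1]
  rw [lintegral_rpow_eq_lintegral_meas_lt_mul volume (Filter.Eventually.of_forall fun x =>
    ENNReal.toReal_nonneg) (measurable_MF u).ennreal_toReal.aemeasurable hp0]
  -- the auxiliary measure
  let ν : Measure VV := volume.withDensity u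
  have hν : ∫⁻ x, ENNReal.ofReal ((2 * (u x).toReal) ^ (p - 1)) ∂ν
      = 2 ^ (p - 1) * ∫⁻ x, (u x) ^ p := by
    rw [lintegral_withDensity_eq_lintegral_mul _ hu (by fun_prop), ← lintegral_const_mul _ (by fun_prop)]
    refine lintegral_congr fun x => ?_
    simp only [Pi.mul_apply]
    rw [← ENNReal.ofReal_rpow_of_nonneg (by positivity) hp1.le, ENNReal.ofReal_mul (by norm_num),
      ENNReal.ofReal_toReal (huf x), ENNReal.mul_rpow_of_nonneg _ _ hp1.le]
    have : u x ^ p = u x * u x ^ (p - 1) := by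
      conv_rhs => rw [← ENNReal.rpow_one (u x), ← ENNReal.rpow_mul,
        ← ENNReal.rpow_add_of_nonneg _ _ (by norm_num) (by linarith)]
      congr 1; ring
    rw [this]; simp; ring
  rw [lintegral_rpow_eq_lintegral_meas_lt_mul ν (Filter.Eventually.of_forall fun x =>
    by positivity) (by fun_prop) hp1] at hν
  have hpt : ∀ s ∈ Set.Ioi (0:ℝ), volume {a | s < (MF u a).toReal} * ENNReal.ofReal (s ^ (p - 1))
      ≤ 128 * (ν {a | s < 2 * (u a).toReal} * ENNReal.ofReal (s ^ (p - 1 - 1))) := by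
    intro s hs
    have hs : 0 < s := hs
    set S := {a | s < 2 * (u a).toReal} with hS
    have hSm : MeasurableSet S := measurableSet_lt measurable_const (by fun_prop)
    have h1 : {a | s < (MF u a).toReal} ⊆ {a | ENNReal.ofReal (s / 2) < MF (S.indicator u) a} := by
      intro a ha
      simp only [Set.mem_ofPred_eq] at ha ⊢
      have h2 := MF_le_add u (S.indicator u) (ENNReal.ofReal (s / 2)) (fun x => by
        by_cases hx : x ∈ S
        · simp [hx]
        · simp only [hx, not_false_eq_true, Set.indicator_of_notMem, zero_add]
          simp only [hS, Set.mem_ofPred_eq, not_lt] at hx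
          rw [ENNReal.le_ofReal_iff_toReal_le (huf x) (by positivity)]
          linarith) a
      by_contra! hcon
      have h3 : MF u a ≤ ENNReal.ofReal s := by
        refine h2.trans ((add_le_add_left hcon _).trans ?_)
        rw [← ENNReal.ofReal_add (by positivity) (by positivity)]
        simp
      rw [ENNReal.le_ofReal_iff_toReal_le (hMf a) hs.le] at h3
      linarith
    have h2 := MF_weak (S.indicator u) (ENNReal.ofReal (s / 2)) (by simpa using hs) (by simp)
    rw [lintegral_indicator hSm, ← withDensity_apply _ hSm] at h2
    have h3 : ENNReal.ofReal (s ^ (p - 1))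
        = 2 * (ENNReal.ofReal (s / 2) * ENNReal.ofReal (s ^ (p - 1 - 1))) := by
      rw [← ENNReal.ofReal_mul (by positivity), ← ENNReal.ofReal_ofNat, 
        ← ENNReal.ofReal_mul (by positivity), Real.rpow_sub_one hs.ne' (p - 1)]
      congr 1
      field_simp
    calc _ ≤ volume {a | ENNReal.ofReal (s / 2) < MF (S.indicator u) a} *
            (2 * (ENNReal.ofReal (s / 2) * ENNReal.ofReal (s ^ (p - 1 - 1)))) := by
          rw [h3]; gcongr
      _ = 2 * ((ENNReal.ofReal (s / 2) * volume {a | ENNReal.ofReal (s / 2) < MF (S.indicator u) a})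
            * ENNReal.ofReal (s ^ (p - 1 - 1))) := by ring
      _ ≤ 2 * ((64 * ν S) * ENNReal.ofReal (s ^ (p - 1 - 1))) := by gcongr
      _ = _ := by ring
  have hfin : ∫⁻ t in Set.Ioi (0:ℝ), ν {a | t < 2 * (u a).toReal} * ENNReal.ofReal (t ^ (p - 1 - 1))
      = (ENNReal.ofReal (p - 1))⁻¹ * (2 ^ (p - 1) * ∫⁻ x, (u x) ^ p) := by
    rw [← hν, ← mul_assoc, ENNReal.inv_mul_cancel (by simpa using hp) (by simp), one_mul]
  calc _ ≤ ENNReal.ofReal p * ∫⁻ t in Set.Ioi (0:ℝ),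
        128 * (ν {a | t < 2 * (u a).toReal} * ENNReal.ofReal (t ^ (p - 1 - 1))) := by
        exact mul_le_mul' le_rfl (setLIntegral_mono' measurableSet_Ioi hpt)
    _ = _ := by
        rw [lintegral_const_mul' _ _ (by simp), hfin]
        simp only [C']
        ring

lemma taylor_bound {G : Type*} [NormedAddCommGroup G] [NormedSpace ℝ G] [CompleteSpace G]
    (F : VV → G) (hF : ContDiff ℝ 2 F) (x w : VV) :
    ‖F (x + w) - F x - fderiv ℝ F x w‖ₑ ≤
      ‖w‖ₑ ^ 2 * ∫⁻ τ in Set.Ioc (0:ℝ) 1, ‖fderiv ℝ (fderiv ℝ F) (x + τ • w)‖ₑ := by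
  have hF1 : ContDiff ℝ 1 (fderiv ℝ F) := hF.fderiv_right (by norm_num)
  have hc2 : Continuous (fderiv ℝ (fderiv ℝ F)) := hF1.continuous_fderiv (by norm_num)
  have hc1 : Continuous (fderiv ℝ F) := hF1.continuous
  set I := ∫⁻ τ in Set.Ioc (0:ℝ) 1, ‖fderiv ℝ (fderiv ℝ F) (x + τ • w)‖ₑ with hI
  have hline : ∀ s : ℝ, HasDerivAt (fun s : ℝ => x + s • w) w s := fun s => by
    simpa using ((hasDerivAt_id s).smul_const w).const_add x
  have h1 : ∀ s ∈ Set.Ioc (0:ℝ) 1, ‖fderiv ℝ F (x + s • w) - fderiv ℝ F x‖ₑ ≤ ‖w‖ₑ * I := by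
    intro s hs
    have hd : ∀ τ ∈ Set.uIcc 0 s, HasDerivAt (fun τ : ℝ => fderiv ℝ F (x + τ • w))
        (fderiv ℝ (fderiv ℝ F) (x + τ • w) w) τ := fun τ _ =>
      ((hF1.differentiable (by norm_num)) _).hasFDerivAt.comp_hasDerivAt τ (hline τ)
    have hint := intervalIntegral.integral_eq_sub_of_hasDerivAt hd
      ((by fun_prop : Continuous fun τ : ℝ => fderiv ℝ (fderiv ℝ F) (x + τ • w) w).intervalIntegrable _ _)
    simp only [zero_smul, add_zero] at hint
    rw [← hint, intervalIntegral.integral_of_le hs.1.le]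
    refine (enorm_integral_le_lintegral_enorm _).trans ?_
    calc _ ≤ ∫⁻ τ in Set.Ioc (0:ℝ) s, ‖w‖ₑ * ‖fderiv ℝ (fderiv ℝ F) (x + τ • w)‖ₑ := by
          refine lintegral_mono fun τ => ?_
          rw [mul_comm]
          exact ContinuousLinearMap.le_opENorm _ _
      _ ≤ ∫⁻ τ in Set.Ioc (0:ℝ) 1, ‖w‖ₑ * ‖fderiv ℝ (fderiv ℝ F) (x + τ • w)‖ₑ :=
          lintegral_mono_set (Set.Ioc_subset_Ioc_right hs.2)
      _ = _ := by rw [lintegral_const_mul' _ _ (by simp)]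
  have hd : ∀ τ ∈ Set.uIcc (0:ℝ) 1, HasDerivAt (fun τ : ℝ => F (x + τ • w) - τ • fderiv ℝ F x w)
        ((fderiv ℝ F (x + τ • w) - fderiv ℝ F x) w) τ := fun τ _ => by
    have a := ((hF.differentiable (by norm_num)) _).hasFDerivAt.comp_hasDerivAt τ (hline τ)
    have b := (hasDerivAt_id τ).smul_const (fderiv ℝ F x w)
    have c := a.sub b
    simp only [one_smul] at c
    exact c
  have hint := intervalIntegral.integral_eq_sub_of_hasDerivAt hd
      ((by fun_prop : Continuous fun τ : ℝ =>
        (fderiv ℝ F (x + τ • w) - fderiv ℝ F x) w).intervalIntegrable _ _)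
  simp only [zero_smul, add_zero, one_smul, sub_zero] at hint
  rw [show F (x + w) - F x - fderiv ℝ F x w = F (x + w) - fderiv ℝ F x w - F x by abel, ← hint,
    intervalIntegral.integral_of_le zero_le_one]
  refine (enorm_integral_le_lintegral_enorm _).trans ?_
  calc _ ≤ ∫⁻ τ in Set.Ioc (0:ℝ) 1, ‖w‖ₑ * I * ‖w‖ₑ := by
        refine setLIntegral_mono' measurableSet_Ioc fun τ hτ => ?_
        exact (ContinuousLinearMap.le_opENorm _ _).trans (mul_le_mul' (h1 τ hτ) le_rfl)
    _ = _ := by simp; ring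

lemma scaled_avg (U : VV → ℝ≥0∞) (hU : Measurable U) (x : VV) {R τ : ℝ} (hR : 0 < R) (hτ : 0 < τ) :
    ∫⁻ w in Metric.ball (0:VV) R, U (x + τ • w) ≤ volume (Metric.ball (0:VV) R) * MF U x := by
  have h1 := avg_le_MF U x x (τ * R) (Metric.mem_ball_self (by positivity))
  have hball : ∀ w : VV, x + τ • w ∈ Metric.ball x (τ * R) ↔ w ∈ Metric.ball (0:VV) R := by
    intro w
    simp [norm_smul, abs_of_pos hτ, hτ]
  have e1 : ∫⁻ w in Metric.ball (0:VV) R, U (x + τ • w)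
      = ∫⁻ w, (Metric.ball x (τ * R)).indicator U (x + τ • w) := by
    rw [← lintegral_indicator Metric.isOpen_ball.measurableSet]
    refine lintegral_congr fun w => ?_
    by_cases hw : w ∈ Metric.ball (0:VV) R
    · rw [Set.indicator_of_mem hw, Set.indicator_of_mem ((hball w).2 hw)]
    · rw [Set.indicator_of_notMem hw, Set.indicator_of_notMem (mt (hball w).1 hw)]
  have hmeas : Measurable fun z => (Metric.ball x (τ * R)).indicator U (x + z) :=
    (hU.indicator Metric.isOpen_ball.measurableSet).comp (measurable_const_add x)
  have e2 : ∫⁻ w, (Metric.ball x (τ * R)).indicator U (x + τ • w)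
      = ENNReal.ofReal ((τ ^ 3)⁻¹) * ∫⁻ z in Metric.ball x (τ * R), U z := by
    have := lintegral_map (μ := (volume : Measure VV)) hmeas (measurable_const_smul τ)
    rw [← this, Measure.map_addHaar_smul volume hτ.ne', lintegral_smul_measure,
      lintegral_add_left_eq_self (fun z => (Metric.ball x (τ * R)).indicator U z),
      lintegral_indicator Metric.isOpen_ball.measurableSet]
    simp [abs_of_pos hτ]
  rw [e1, e2]
  refine (mul_le_mul' le_rfl h1).trans (le_of_eq ?_)
  rw [vol_ball_mul x 0 hR hτ, ← mul_assoc, ← mul_assoc, ← ENNReal.ofReal_mul (by positivity),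
    inv_mul_cancel₀ (by positivity)]
  simp

lemma fderiv_bound_t {G : Type*} [NormedAddCommGroup G] [NormedSpace ℝ G] [CompleteSpace G]
    (F : VV → G) (hF : ContDiff ℝ 2 F) (x v : VV) (hv : ‖v‖ ≤ 1) (t : ℝ) (ht : 0 < t) :
    ENNReal.ofReal t * ‖fderiv ℝ F x v‖ₑ ≤ 16 * (MF (fun y => ‖F y‖ₑ) x
      + ENNReal.ofReal (4 * t ^ 2) * MF (fun y => ‖fderiv ℝ (fderiv ℝ F) y‖ₑ) x) := by
  have hF1 : ContDiff ℝ 1 (fderiv ℝ F) := hF.fderiv_right (by norm_num)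
  have hc2 : Continuous (fderiv ℝ (fderiv ℝ F)) := hF1.continuous_fderiv (by norm_num)
  have hc0 : Continuous F := hF.continuous
  have hc2m : Measurable fun y => ‖fderiv ℝ (fderiv ℝ F) y‖ₑ := by
    apply Continuous.measurable
    fun_prop
  let J : VV → ℝ≥0∞ := fun w => ∫⁻ τ in Set.Ioc (0:ℝ) 1, ‖fderiv ℝ (fderiv ℝ F) (x + τ • w)‖ₑ
  let H : VV → ℝ≥0∞ := fun w => ‖F (x + w)‖ₑ + ENNReal.ofReal (4 * t ^ 2) * J w
  have hm2 : Measurable (Function.uncurry fun (w : VV) (τ : ℝ) =>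
      ‖fderiv ℝ (fderiv ℝ F) (x + τ • w)‖ₑ) := by
    apply Continuous.measurable
    unfold Function.uncurry
    fun_prop
  have hJm : Measurable J := hm2.lintegral_prod_right'
  have hHm : Measurable H := by
    have : Measurable fun w => ‖F (x + w)‖ₑ := by
      apply Continuous.measurable
      fun_prop
    exact this.add (hJm.const_mul _)
  have hHint : ∫⁻ w in Metric.ball (0:VV) (2 * t), H w ≤ volume (Metric.ball (0:VV) (2 * t)) *
      (MF (fun y => ‖F y‖ₑ) x
      + ENNReal.ofReal (4 * t ^ 2) * MF (fun y => ‖fderiv ℝ (fderiv ℝ F) y‖ₑ) x) := by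
    simp only [H]
    rw [lintegral_add_right _ (hJm.const_mul _), lintegral_const_mul _ hJm, mul_add]
    gcongr ?_ + ?_
    · have := scaled_avg (fun y => ‖F y‖ₑ) hc0.enorm.measurable x (R := 2 * t) (τ := 1)
        (by positivity) one_pos
      simpa using this
    · rw [mul_left_comm]
      gcongr
      simp only [J]
      rw [lintegral_lintegral_swap hm2.aemeasurable]
      calc _ ≤ ∫⁻ τ in Set.Ioc (0:ℝ) 1, volume (Metric.ball (0:VV) (2 * t)) *
            MF (fun y => ‖fderiv ℝ (fderiv ℝ F) y‖ₑ) x := by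
            refine setLIntegral_mono' measurableSet_Ioc fun τ hτ => ?_
            exact scaled_avg (fun y => ‖fderiv ℝ (fderiv ℝ F) y‖ₑ) hc2m x
              (by positivity) hτ.1
        _ = _ := by simp
  have hR : ∀ w ∈ Metric.ball (0:VV) (2 * t), ‖F (x + w) - F x - fderiv ℝ F x w‖ₑ
      ≤ ENNReal.ofReal (4 * t ^ 2) * J w := by
    intro w hw
    refine (taylor_bound F hF x w).trans ?_
    refine mul_le_mul' ?_ le_rfl
    rw [← ofReal_norm, ← ENNReal.ofReal_pow (norm_nonneg _)]
    apply ENNReal.ofReal_le_ofReal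
    have : ‖w‖ < 2 * t := by simpa using hw
    nlinarith [norm_nonneg w]
  have hpt : ∀ s ∈ Metric.ball (0:VV) t, ENNReal.ofReal t * ‖fderiv ℝ F x v‖ₑ
      ≤ H (t • v + s) + H s := by
    intro s hs
    have hs : ‖s‖ < t := by simpa using hs
    have hs2 : s ∈ Metric.ball (0:VV) (2 * t) := by simp; linarith
    have hs3 : t • v + s ∈ Metric.ball (0:VV) (2 * t) := by
      simp only [mem_ball_zero_iff]
      refine (norm_add_le _ _).trans_lt ?_
      rw [norm_smul, Real.norm_of_nonneg ht.le]
      nlinarith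
    have e : t • fderiv ℝ F x v = (F (x + (t • v + s)) - (F (x + (t • v + s)) - F x
        - fderiv ℝ F x (t • v + s))) - (F (x + s) - (F (x + s) - F x - fderiv ℝ F x s)) := by
      simp only [map_add, map_smul]
      abel
    have e' : ENNReal.ofReal t * ‖fderiv ℝ F x v‖ₑ = ‖t • fderiv ℝ F x v‖ₑ := by
      rw [enorm_smul, Real.enorm_of_nonneg ht.le]
    rw [e', e]
    refine enorm_sub_le.trans (add_le_add ?_ ?_)
    · exact enorm_sub_le.trans (add_le_add le_rfl (hR _ hs3))
    · exact enorm_sub_le.trans (add_le_add le_rfl (hR _ hs2))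
  have hshift : ∫⁻ s in Metric.ball (0:VV) t, H (t • v + s)
      ≤ ∫⁻ w in Metric.ball (0:VV) (2 * t), H w := by
    rw [← lintegral_indicator Metric.isOpen_ball.measurableSet,
      ← lintegral_indicator Metric.isOpen_ball.measurableSet,
      ← lintegral_add_left_eq_self ((Metric.ball (0:VV) (2 * t)).indicator H) (t • v)]
    refine lintegral_mono fun s => ?_
    by_cases hs : s ∈ Metric.ball (0:VV) t
    · rw [Set.indicator_of_mem hs, Set.indicator_of_mem]
      have hs : ‖s‖ < t := by simpa using hs
      simp only [mem_ball_zero_iff]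
      refine (norm_add_le _ _).trans_lt ?_
      rw [norm_smul, Real.norm_of_nonneg ht.le]
      nlinarith
    · rw [Set.indicator_of_notMem hs]; exact zero_le
  have hvol0 : volume (Metric.ball (0:VV) t) ≠ 0 := (Metric.measure_ball_pos volume _ ht).ne'
  have hvolt : volume (Metric.ball (0:VV) t) ≠ ⊤ := measure_ball_lt_top.ne
  rw [← ENNReal.mul_le_mul_iff_right hvol0 hvolt]
  calc _ = ∫⁻ s in Metric.ball (0:VV) t, ENNReal.ofReal t * ‖fderiv ℝ F x v‖ₑ := by
        simp [mul_comm]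
    _ ≤ ∫⁻ s in Metric.ball (0:VV) t, (H (t • v + s) + H s) :=
        setLIntegral_mono' Metric.isOpen_ball.measurableSet hpt
    _ = (∫⁻ s in Metric.ball (0:VV) t, H (t • v + s)) + ∫⁻ s in Metric.ball (0:VV) t, H s :=
        lintegral_add_right _ hHm
    _ ≤ (∫⁻ w in Metric.ball (0:VV) (2 * t), H w) + ∫⁻ w in Metric.ball (0:VV) (2 * t), H w :=
        add_le_add hshift (lintegral_mono_set (Metric.ball_subset_ball (by linarith)))
    _ ≤ _ := by
        rw [← two_mul]
        refine (mul_le_mul' le_rfl hHint).trans (le_of_eq ?_)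
        rw [vol_ball_mul 0 0 ht two_pos, show ENNReal.ofReal ((2:ℝ) ^ 3) = 8 by norm_num]
        ring

lemma fderiv_bound {G : Type*} [NormedAddCommGroup G] [NormedSpace ℝ G] [CompleteSpace G]
    (F : VV → G) (hF : ContDiff ℝ 2 F) (x : VV)
    (hA : MF (fun y => ‖F y‖ₑ) x ≠ ⊤)
    (hB : MF (fun y => ‖fderiv ℝ (fderiv ℝ F) y‖ₑ) x ≠ ⊤) :
    ‖fderiv ℝ F x‖ ^ 2 ≤ 4096 * ((MF (fun y => ‖F y‖ₑ) x).toReal *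
      (MF (fun y => ‖fderiv ℝ (fderiv ℝ F) y‖ₑ) x).toReal) := by
  set A := MF (fun y => ‖F y‖ₑ) x
  set B := MF (fun y => ‖fderiv ℝ (fderiv ℝ F) y‖ₑ) x
  have hA0 : 0 ≤ A.toReal := ENNReal.toReal_nonneg
  have hB0 : 0 ≤ B.toReal := ENNReal.toReal_nonneg
  have h1 : ∀ t : ℝ, 0 < t → ‖fderiv ℝ F x‖ * t ≤ 16 * A.toReal + 64 * B.toReal * t ^ 2 := by
    intro t ht
    rw [← le_div_iff₀ ht]
    refine ContinuousLinearMap.opNorm_le_of_unit_norm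
      (div_nonneg (by nlinarith [sq_nonneg t, mul_nonneg hB0 (sq_nonneg t)]) ht.le) fun v hv => ?_
    rw [le_div_iff₀ ht]
    have h := fderiv_bound_t F hF x v hv.le t ht
    have hfin : 16 * (A + ENNReal.ofReal (4 * t ^ 2) * B) ≠ ⊤ :=
      ENNReal.mul_ne_top (by simp) (ENNReal.add_ne_top.2 ⟨hA, ENNReal.mul_ne_top ENNReal.ofReal_ne_top hB⟩)
    have h' := ENNReal.toReal_mono hfin h
    rw [ENNReal.toReal_mul, ENNReal.toReal_mul, ENNReal.toReal_add hA
      (ENNReal.mul_ne_top ENNReal.ofReal_ne_top hB), ENNReal.toReal_mul, ENNReal.toReal_ofReal ht.le,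
      ENNReal.toReal_ofReal (by positivity)] at h'
    simp at h'
    linarith
  have h2 : ∀ t : ℝ, 0 ≤ (64 * B.toReal) * (t * t) + (-‖fderiv ℝ F x‖) * t + 16 * A.toReal := by
    intro t
    rcases le_or_gt t 0 with ht | ht
    · have := mul_nonneg (norm_nonneg (fderiv ℝ F x)) (neg_nonneg.2 ht)
      have h3 : 0 ≤ (64 * B.toReal) * (t * t) :=
        mul_nonneg (mul_nonneg (by norm_num) hB0) (mul_self_nonneg t)
      linarith
    · have := h1 t ht
      linarith
  have h3 := discrim_le_zero h2
  unfold discrim at h3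
  linarith

lemma MF_eLpNorm (a : ℝ≥0∞) (ha : 1 < a) : ∃ C : ℝ≥0, ∀ (G : Type) [NormedAddCommGroup G]
    (F : VV → G), Continuous F → ∀ B : ℝ≥0, (∀ x, ‖F x‖ₑ ≤ B) →
    eLpNorm (fun x => (MF (fun y => ‖F y‖ₑ) x).toReal) a volume ≤ C * eLpNorm F a volume := by
  have conv : ∀ (G : Type) [NormedAddCommGroup G]
    (F : VV → G), ∀ B : ℝ≥0, (∀ x, ‖F x‖ₑ ≤ B) → ∀ x,
    ‖(MF (fun y => ‖F y‖ₑ) x).toReal‖ₑ = MF (fun y => ‖F y‖ₑ) x := by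
    intro G _ F B hB x
    have : MF (fun y => ‖F y‖ₑ) x ≠ ⊤ := ((MF_le_const _ B hB x).trans_lt (by simp)).ne
    rw [Real.enorm_of_nonneg ENNReal.toReal_nonneg, ENNReal.ofReal_toReal this]
  by_cases hat : a = ⊤
  · subst hat
    refine ⟨1, fun G _ F hF B hB => ?_⟩
    rw [eLpNorm_exponent_top, eLpNorm_exponent_top]
    simp only [eLpNormEssSup, ENNReal.coe_one, one_mul, conv G F B hB]
    refine essSup_le_of_ae_le _ (Filter.Eventually.of_forall fun x => ?_)
    exact MF_le_essSup _ x
  · have ha0 : a ≠ 0 := (zero_lt_one.trans ha).ne'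
    have ha1 : 1 < a.toReal := by
      rw [← ENNReal.toReal_one]; exact (ENNReal.toReal_lt_toReal (by simp) hat).2 ha
    obtain ⟨C, hC⟩ := MF_strong a.toReal ha1
    refine ⟨C ^ (1 / a.toReal), fun G _ F hF B hB => ?_⟩
    rw [eLpNorm_eq_lintegral_rpow_enorm_toReal ha0 hat, eLpNorm_eq_lintegral_rpow_enorm_toReal ha0 hat]
    simp only [conv G F B hB]
    have h0 : 0 ≤ 1 / a.toReal := by positivity
    rw [ENNReal.coe_rpow_of_nonneg _ h0, ← ENNReal.mul_rpow_of_nonneg _ _ h0]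
    exact ENNReal.rpow_le_rpow (hC _ (by apply Continuous.measurable; fun_prop) B hB) h0

lemma GN_step (a b p : ℝ≥0∞) (ha : 1 < a) (hb : 1 < b) (h : a⁻¹ + b⁻¹ = 2 * p⁻¹) :
    ∃ C : ℝ≥0, ∀ (G : Type) [NormedAddCommGroup G] [NormedSpace ℝ G] [CompleteSpace G]
    (F : VV → G), ContDiff ℝ 2 F → ∀ B : ℝ≥0, (∀ x, ‖F x‖ₑ ≤ B) →
    (∀ x, ‖fderiv ℝ (fderiv ℝ F) x‖ₑ ≤ B) →
    eLpNorm (fderiv ℝ F) p volume ^ 2 ≤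
      C * (eLpNorm F a volume * eLpNorm (fderiv ℝ (fderiv ℝ F)) b volume) := by
  obtain ⟨C₁, hC₁⟩ := MF_eLpNorm a ha
  obtain ⟨C₂, hC₂⟩ := MF_eLpNorm b hb
  refine ⟨4096 * (C₁ * C₂), fun G _ _ _ F hF B hB hB2 => ?_⟩
  have hF1 : ContDiff ℝ 1 (fderiv ℝ F) := hF.fderiv_right (by norm_num)
  have hc2 : Continuous (fderiv ℝ (fderiv ℝ F)) := hF1.continuous_fderiv (by norm_num)
  have h1 := hC₁ G F hF.continuous B hB
  have h2 := hC₂ _ (fderiv ℝ (fderiv ℝ F)) hc2 B hB2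
  set A : VV → ℝ := fun x => (MF (fun y => ‖F y‖ₑ) x).toReal
  set D : VV → ℝ := fun x => (MF (fun y => ‖fderiv ℝ (fderiv ℝ F) y‖ₑ) x).toReal
  have hAm : AEStronglyMeasurable A volume :=
    (measurable_MF _).ennreal_toReal.aestronglyMeasurable
  have hDm : AEStronglyMeasurable D volume :=
    (measurable_MF _).ennreal_toReal.aestronglyMeasurable
  have hH : ENNReal.HolderTriple a b (p / 2) := ⟨by
    rw [h, ENNReal.inv_div (by simp) (by simp), div_eq_mul_inv]⟩
  have hmul := eLpNorm_le_eLpNorm_mul_eLpNorm'_of_norm (p := a) (q := b) (r := p / 2)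
    hAm hDm (fun x y => x * y) 1 (Filter.Eventually.of_forall fun x => by simp)
  have hsq : eLpNorm (fderiv ℝ F) p volume ^ 2
      = eLpNorm (fun x => ‖fderiv ℝ F x‖ ^ (2:ℝ)) (p / 2) volume := by
    rw [eLpNorm_norm_rpow _ two_pos]
    rw [show ENNReal.ofReal 2 = 2 by norm_num, ENNReal.div_mul_cancel (by simp) (by simp)]
    norm_num
  have hle : eLpNorm (fun x => ‖fderiv ℝ F x‖ ^ (2:ℝ)) (p / 2) volume
      ≤ ENNReal.ofReal 4096 * eLpNorm (fun x => A x * D x) (p / 2) volume := by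
    refine eLpNorm_le_mul_eLpNorm_of_ae_le_mul (Filter.Eventually.of_forall fun x => ?_) _
    have := fderiv_bound F hF x ((MF_le_const _ B hB x).trans_lt (by simp)).ne
      ((MF_le_const _ B hB2 x).trans_lt (by simp)).ne
    have hn : 0 ≤ A x * D x := mul_nonneg ENNReal.toReal_nonneg ENNReal.toReal_nonneg
    rw [Real.norm_of_nonneg hn]
    simpa using this
  rw [hsq]
  calc _ ≤ ENNReal.ofReal 4096 * (1 * eLpNorm A a volume * eLpNorm D b volume) :=
        hle.trans (mul_le_mul' le_rfl (by simpa using hmul))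
    _ ≤ ENNReal.ofReal 4096 * (1 * (C₁ * eLpNorm F a volume) *
          (C₂ * eLpNorm (fderiv ℝ (fderiv ℝ F)) b volume)) := by gcongr
    _ = _ := by
        rw [show ENNReal.ofReal 4096 = 4096 by norm_num]
        push_cast
        ring

lemma GN_step' (a b p : ℝ≥0∞) (ha : 1 < a) (hb : 1 < b) (h : a⁻¹ + b⁻¹ = 2 * p⁻¹) :
    ∃ C : ℝ≥0, ∀ (G : Type) [NormedAddCommGroup G] [NormedSpace ℝ G] [CompleteSpace G]
    (G' : Type) [NormedAddCommGroup G'] [NormedSpace ℝ G'] (L : G' ≃ₗᵢ[ℝ] (VV →L[ℝ] G))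
    (F : VV → G) (F' : VV → G'), fderiv ℝ F = L ∘ F' → ContDiff ℝ 2 F →
    ∀ B : ℝ≥0, (∀ x, ‖F x‖ₑ ≤ B) → (∀ x, ‖fderiv ℝ F' x‖ₑ ≤ B) →
    eLpNorm F' p volume ^ 2 ≤ C * (eLpNorm F a volume * eLpNorm (fderiv ℝ F') b volume) := by
  obtain ⟨C, hC⟩ := GN_step a b p ha hb h
  refine ⟨C, fun G _ _ _ G' _ _ L F F' hL hF B hB hB2 => ?_⟩
  have hn1 : ∀ x, ‖fderiv ℝ F x‖ = ‖F' x‖ := fun x => by rw [hL]; simp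
  have hn2 : ∀ x, ‖fderiv ℝ (fderiv ℝ F) x‖ = ‖fderiv ℝ F' x‖ := fun x => by
    rw [hL, LinearIsometryEquiv.comp_fderiv]
    exact LinearIsometry.norm_toContinuousLinearMap_comp L.toLinearIsometry
  have := hC G F hF B hB (fun x => by
    rw [← ofReal_norm, hn2, ofReal_norm]; exact hB2 x)
  rwa [eLpNorm_congr_norm_ae (g := F') (Filter.Eventually.of_forall hn1),
    eLpNorm_congr_norm_ae (f := fderiv ℝ (fderiv ℝ F)) (g := fderiv ℝ F')
      (Filter.Eventually.of_forall hn2)] at this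

lemma schwartz_step (a b p : ℝ≥0∞) (ha : 1 < a) (hb : 1 < b) (h : a⁻¹ + b⁻¹ = 2 * p⁻¹) (n : ℕ) :
    ∃ C : ℝ≥0, ∀ g : SchwartzMap VV ℝ,
    eLpNorm (iteratedFDeriv ℝ (n + 1) ⇑g) p volume ^ 2 ≤
      C * (eLpNorm (iteratedFDeriv ℝ n ⇑g) a volume *
        eLpNorm (iteratedFDeriv ℝ (n + 2) ⇑g) b volume) := by
  obtain ⟨C, hC⟩ := GN_step' a b p ha hb h
  refine ⟨C, fun g => ?_⟩
  obtain ⟨B₁, hB₁, hb₁⟩ := g.decay 0 n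
  obtain ⟨B₂, hB₂, hb₂⟩ := g.decay 0 (n + 2)
  have hsm : ContDiff ℝ 2 (iteratedFDeriv ℝ n ⇑g) := by
    have h0 : ContDiff ℝ ((n + 2 : ℕ) : WithTop ℕ∞) ⇑g := g.smooth ((n + 2 : ℕ) : ℕ∞)
    refine ContDiff.iteratedFDeriv_right (m := 2) h0 (le_of_eq ?_)
    push_cast; rw [add_comm]
  have hen : ∀ {G : Type} [NormedAddCommGroup G] (y : G) (c : ℝ), ‖y‖ ≤ c →
      ‖y‖ₑ ≤ (c.toNNReal : ℝ≥0∞) := by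
    intro G _ y c hy
    rw [← ofReal_norm]
    exact ENNReal.ofReal_le_ofReal hy
  have := hC _ _ (continuousMultilinearCurryLeftEquiv ℝ (fun _ : Fin (n + 1) => VV) ℝ)
    (iteratedFDeriv ℝ n ⇑g) (iteratedFDeriv ℝ (n + 1) ⇑g) fderiv_iteratedFDeriv
    hsm (max B₁ B₂).toNNReal
    (fun x => hen _ _ (le_max_of_le_left (by simpa using hb₁ x)))
    (fun x => hen _ _ (le_max_of_le_right (by
      rw [norm_fderiv_iteratedFDeriv]; simpa using hb₂ x)))
  rwa [eLpNorm_congr_norm_ae (f := fderiv ℝ (iteratedFDeriv ℝ (n + 1) ⇑g))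
      (g := iteratedFDeriv ℝ (n + 2) ⇑g)
      (Filter.Eventually.of_forall fun x => norm_fderiv_iteratedFDeriv)] at this

lemma schwartz_fin (n : ℕ) : ∀ (G : Type) [NormedAddCommGroup G] [NormedSpace ℝ G]
    (g : SchwartzMap VV G) (p : ℝ≥0∞), eLpNorm (iteratedFDeriv ℝ n ⇑g) p volume < ⊤ := by
  induction n with
  | zero =>
    intro G _ _ g p
    rw [eLpNorm_congr_norm_ae (g := ⇑g) (Filter.Eventually.of_forall fun x => by simp)]
    exact (g.memLp p volume).2
  | succ n ih =>
    intro G _ _ g p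
    have := ih _ (SchwartzMap.fderivCLM ℝ VV G g) p
    rwa [eLpNorm_congr_norm_ae (g := iteratedFDeriv ℝ (n + 1) ⇑g)
      (Filter.Eventually.of_forall fun x => norm_iteratedFDeriv_fderiv)] at this

/-- Interpolated exponents. -/
noncomputable def PP (k : ℕ) (α β : ℝ) (j : ℕ) : ℝ≥0∞ :=
  (ENNReal.ofReal ((1 - (j:ℝ) / k) * α + ((j:ℝ) / k) * β))⁻¹

lemma PP_val_bounds {k : ℕ} {α β : ℝ} (hα : 0 ≤ α) (hα1 : α < 1) (hβ : 0 ≤ β) (hβ1 : β < 1)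
    {j : ℕ} (hj : j ≤ k) : 0 ≤ (1 - (j:ℝ) / k) * α + ((j:ℝ) / k) * β ∧
      (1 - (j:ℝ) / k) * α + ((j:ℝ) / k) * β < 1 := by
  have h0 : (0:ℝ) ≤ (j:ℝ) / k := by positivity
  have h1 : (j:ℝ) / k ≤ 1 := div_le_one_of_le₀ (by exact_mod_cast hj) (by positivity)
  constructor
  · have := mul_nonneg (sub_nonneg.2 h1) hα
    have := mul_nonneg h0 hβ
    linarith
  · rcases h1.lt_or_eq with h | h
    · nlinarith [mul_pos (sub_pos.2 h) (sub_pos.2 hα1), mul_nonneg h0 (sub_pos.2 hβ1).le]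
    · rw [h]; linarith

lemma PP_step (k : ℕ) (α β : ℝ) (hα : 0 ≤ α) (hα1 : α < 1) (hβ : 0 ≤ β) (hβ1 : β < 1) :
    ∃ C : ℝ≥0, 1 ≤ C ∧ ∀ (g : SchwartzMap VV ℝ) (j : ℕ), j + 2 ≤ k →
    eLpNorm (iteratedFDeriv ℝ (j + 1) ⇑g) (PP k α β (j + 1)) volume ^ 2 ≤
      C * (eLpNorm (iteratedFDeriv ℝ j ⇑g) (PP k α β j) volume *
        eLpNorm (iteratedFDeriv ℝ (j + 2) ⇑g) (PP k α β (j + 2)) volume) := by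
  have hPP : ∀ j ≤ k, 1 < PP k α β j := fun j hj => by
    have := (PP_val_bounds hα hα1 hβ hβ1 hj).2
    unfold PP
    rw [ENNReal.one_lt_inv]
    simpa using this
  have hstep : ∀ j : ℕ, ∃ C : ℝ≥0, j + 2 ≤ k → ∀ (g : SchwartzMap VV ℝ),
    eLpNorm (iteratedFDeriv ℝ (j + 1) ⇑g) (PP k α β (j + 1)) volume ^ 2 ≤
      C * (eLpNorm (iteratedFDeriv ℝ j ⇑g) (PP k α β j) volume *
        eLpNorm (iteratedFDeriv ℝ (j + 2) ⇑g) (PP k α β (j + 2)) volume) := by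
    intro j
    by_cases hj : j + 2 ≤ k
    · obtain ⟨C, hC⟩ := schwartz_step (PP k α β j) (PP k α β (j + 2)) (PP k α β (j + 1))
        (hPP _ (by omega)) (hPP _ hj) (by
          have hk : (k:ℝ) ≠ 0 := by
            have : k ≠ 0 := by omega
            exact_mod_cast this
          unfold PP
          rw [inv_inv, inv_inv, inv_inv,
            ← ENNReal.ofReal_add (PP_val_bounds hα hα1 hβ hβ1 (by omega)).1
              (PP_val_bounds hα hα1 hβ hβ1 hj).1,
            show (2:ℝ≥0∞) = ENNReal.ofReal 2 by norm_num, ← ENNReal.ofReal_mul (by norm_num)]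
          congr 1
          push_cast
          field_simp
          ring) j
      exact ⟨C, fun _ => hC⟩
    · exact ⟨0, fun h => absurd h hj⟩
  choose C hC using hstep
  refine ⟨1 + ∑ j ∈ Finset.range k, C j, by simp, fun g j hj => (hC j hj g).trans ?_⟩
  refine mul_le_mul' ?_ le_rfl
  have : C j ≤ ∑ j ∈ Finset.range k, C j :=
    Finset.single_le_sum (f := C) (fun _ _ => zero_le) (Finset.mem_range.2 (by omega))
  exact_mod_cast this.trans (by simp)

lemma max_principle (k : ℕ) (y : ℕ → ℝ≥0) (h : ∀ j, j + 2 ≤ k → y (j + 1) ^ 2 ≤ y j * y (j + 2))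
    (j : ℕ) (hj : j ≤ k) : y j ≤ y 0 + y k := by
  have hex : ∃ m, m ≤ k ∧ ∀ i ≤ k, y i ≤ y m := by
    obtain ⟨m, hm, hmax⟩ := Finset.exists_max_image (Finset.range (k + 1)) y ⟨0, by simp⟩
    exact ⟨m, by simpa [Nat.lt_succ_iff] using hm, fun i hi => hmax i (by simp; omega)⟩
  classical
  obtain ⟨hm, hmax⟩ := Nat.find_spec hex
  have hmin := fun i => Nat.find_min (m := i) hex
  generalize Nat.find hex = m at hm hmax hmin
  refine (hmax j hj).trans ?_
  rcases Nat.eq_zero_or_pos m with h0 | h0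
  · subst h0; simp
  rcases hm.eq_or_lt with h1 | h1
  · subst h1; simp
  exfalso
  obtain ⟨l, rfl⟩ : ∃ l, m = l + 1 := ⟨m - 1, by omega⟩
  have hlt : y l < y (l + 1) := by
    have := hmin l (by omega)
    push Not at this
    obtain ⟨i, hi, hi2⟩ := this (by omega)
    exact hi2.trans_le (hmax i hi)
  have h2 := h l (by omega)
  have h3 := hmax (l + 2) (by omega)
  have h4 : y l * y (l + 2) ≤ y l * y (l + 1) := mul_le_mul' le_rfl h3
  have h5 : y l * y (l + 1) < y (l + 1) * y (l + 1) :=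
    mul_lt_mul_of_pos_right hlt ((zero_le).trans_lt hlt)
  rw [sq] at h2
  exact absurd (h2.trans h4) (not_le.2 h5)

lemma max_principle_const (k : ℕ) (K : ℝ≥0) (hK : 1 ≤ K) (x : ℕ → ℝ≥0∞)
    (hx : ∀ j ≤ k, x j ≠ ⊤)
    (h : ∀ j, j + 2 ≤ k → x (j + 1) ^ 2 ≤ K * (x j * x (j + 2)))
    (j : ℕ) (hj : j ≤ k) : x j ≤ (K ^ (k ^ 2) : ℝ≥0) * (x 0 + x k) := by
  have hc : ∀ j ≤ k, ((x j).toNNReal : ℝ≥0∞) = x j := fun j hj => ENNReal.coe_toNNReal (hx j hj)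
  have h' : ∀ j, j + 2 ≤ k → (x (j + 1)).toNNReal ^ 2 ≤
      K * ((x j).toNNReal * (x (j + 2)).toNNReal) := by
    intro j hj
    have := h j hj
    rw [← hc (j + 1) (by omega), ← hc j (by omega), ← hc (j + 2) hj] at this
    exact_mod_cast this
  have key := max_principle k (fun j => K ^ (j ^ 2) * (x j).toNNReal) (by
    intro j hj
    calc (K ^ ((j + 1) ^ 2) * (x (j + 1)).toNNReal) ^ 2
        = K ^ (2 * (j + 1) ^ 2) * (x (j + 1)).toNNReal ^ 2 := by ring
      _ ≤ K ^ (2 * (j + 1) ^ 2) * (K * ((x j).toNNReal * (x (j + 2)).toNNReal)) :=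
          mul_le_mul' le_rfl (h' j hj)
      _ = K ^ (2 * (j + 1) ^ 2 + 1) * ((x j).toNNReal * (x (j + 2)).toNNReal) := by ring
      _ ≤ K ^ (2 * (j + 1) ^ 2 + 2) * ((x j).toNNReal * (x (j + 2)).toNNReal) :=
          mul_le_mul' (pow_le_pow_right₀ hK (by omega)) le_rfl
      _ = _ := by ring) j hj
  have h1 : (x j).toNNReal ≤ K ^ (k ^ 2) * ((x 0).toNNReal + (x k).toNNReal) := by
    calc (x j).toNNReal ≤ K ^ (j ^ 2) * (x j).toNNReal :=
          le_mul_of_one_le_left' (one_le_pow₀ hK)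
      _ ≤ _ := key
      _ ≤ _ := by
        rw [mul_add]
        exact add_le_add (mul_le_mul' (pow_le_pow_right₀ hK (by simp)) le_rfl) le_rfl
  rw [← hc j hj, ← hc 0 (by omega), ← hc k le_rfl]
  exact_mod_cast h1


/-- The `L^p` norm of the `j`-th derivative. -/
noncomputable def NN (g : SchwartzMap VV ℝ) (j : ℕ) (p : ℝ≥0∞) : ℝ≥0∞ :=
  eLpNorm (iteratedFDeriv ℝ j ⇑g) p volume

lemma holder_iter (g h : SchwartzMap VV ℝ) (i j : ℕ) (p q r : ℝ≥0∞) (hpq : p⁻¹ + q⁻¹ = r⁻¹) :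
    eLpNorm (fun x => ‖iteratedFDeriv ℝ i ⇑g x‖ * ‖iteratedFDeriv ℝ j ⇑h x‖) r volume ≤
      eLpNorm (iteratedFDeriv ℝ i ⇑g) p volume * eLpNorm (iteratedFDeriv ℝ j ⇑h) q volume := by
  have hH : ENNReal.HolderTriple p q r := ⟨hpq⟩
  have hg : Continuous (iteratedFDeriv ℝ i ⇑g) :=
    (g.smooth (i : ℕ∞)).continuous_iteratedFDeriv (m := i) le_rfl
  have hh : Continuous (iteratedFDeriv ℝ j ⇑h) :=
    (h.smooth (j : ℕ∞)).continuous_iteratedFDeriv (m := j) le_rfl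
  have := eLpNorm_le_eLpNorm_mul_eLpNorm'_of_norm (p := p) (q := q) (r := r) (μ := volume)
    hg.aestronglyMeasurable hh.aestronglyMeasurable (fun x y => ‖x‖ * ‖y‖) 1
    (Filter.Eventually.of_forall fun x => by simp)
  simpa using this

theorem product_leibniz_estimate (k : ℕ) (r r₁ r₂ r₃ r₄ : ℝ≥0∞)
    (hr : 1 < r) (hr' : r < ⊤) (hr₂ : 1 < r₂) (hr₂' : r₂ < ⊤)
    (hr₄ : 1 < r₄) (hr₄' : r₄ < ⊤) (hr₁ : 1 ≤ r₁) (hr₃ : 1 ≤ r₃)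
    (h12 : 1 / r₁ + 1 / r₂ = 1 / r) (h34 : 1 / r₃ + 1 / r₄ = 1 / r) :
    ∃ C : ℝ≥0, 0 < C ∧ ∀ g h : SchwartzMap (EuclideanSpace ℝ (Fin 3)) ℝ,
      eLpNorm (iteratedFDeriv ℝ k fun x => g x * h x) r volume ≤
        (C : ℝ≥0∞) * eLpNorm (⇑g) r₁ volume * eLpNorm (iteratedFDeriv ℝ k ⇑h) r₂ volume
          + (C : ℝ≥0∞) * eLpNorm (⇑h) r₃ volume
              * eLpNorm (iteratedFDeriv ℝ k ⇑g) r₄ volume := by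
  simp only [one_div] at h12 h34
  have hz : ∀ (g : SchwartzMap VV ℝ) (p : ℝ≥0∞),
      eLpNorm (iteratedFDeriv ℝ 0 ⇑g) p volume = eLpNorm (⇑g) p volume := fun g p =>
    eLpNorm_congr_norm_ae (Filter.Eventually.of_forall fun x => by simp)
  -- pointwise Leibniz rule, integrated
  have hleib : ∀ g h : SchwartzMap VV ℝ,
      eLpNorm (iteratedFDeriv ℝ k fun x => g x * h x) r volume ≤
      ∑ j ∈ Finset.range (k + 1), (k.choose j : ℝ≥0∞) * eLpNorm (fun x =>
        ‖iteratedFDeriv ℝ j ⇑g x‖ * ‖iteratedFDeriv ℝ (k - j) ⇑h x‖) r volume := by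
    intro g h
    have hc : ∀ (g : SchwartzMap VV ℝ) (i : ℕ), Continuous (iteratedFDeriv ℝ i ⇑g) := fun g i =>
      (g.smooth (i : ℕ∞)).continuous_iteratedFDeriv (m := i) le_rfl
    have h1 : eLpNorm (iteratedFDeriv ℝ k fun x => g x * h x) r volume ≤
        eLpNorm (∑ j ∈ Finset.range (k + 1), (k.choose j : ℝ) • fun x =>
        ‖iteratedFDeriv ℝ j ⇑g x‖ * ‖iteratedFDeriv ℝ (k - j) ⇑h x‖) r volume := by
      refine eLpNorm_mono_real fun x => ?_
      refine (norm_iteratedFDeriv_mul_le (g.smooth (k : ℕ∞)) (h.smooth (k : ℕ∞)) x le_rfl).trans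
        (le_of_eq ?_)
      simp [Finset.sum_apply, mul_assoc]
    refine h1.trans ((eLpNorm_sum_le (fun j _ => ?_) hr.le).trans (le_of_eq ?_))
    · exact (((hc g j).norm.mul (hc h (k - j)).norm).aestronglyMeasurable).const_smul _
    · refine Finset.sum_congr rfl fun j _ => ?_
      rw [eLpNorm_const_smul]
      congr 1
      simp
  rcases Nat.eq_zero_or_pos k with rfl | hk
  · refine ⟨1, one_pos, fun g h => ?_⟩
    refine (hleib g h).trans ?_
    have := holder_iter g h 0 0 r₁ r₂ r h12
    simp only [hz] at this ⊢
    simp at this ⊢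
    exact this.trans le_self_add
  -- the four inverse exponents
  have hrinv : r⁻¹ < 1 := ENNReal.inv_lt_one.2 hr
  have hs1 : r₁⁻¹ < 1 := (h12 ▸ le_self_add : r₁⁻¹ ≤ r⁻¹).trans_lt hrinv
  have hs3 : r₃⁻¹ < 1 := (h34 ▸ le_self_add : r₃⁻¹ ≤ r⁻¹).trans_lt hrinv
  have hs2 : r₂⁻¹ < 1 := ENNReal.inv_lt_one.2 hr₂
  have hs4 : r₄⁻¹ < 1 := ENNReal.inv_lt_one.2 hr₄
  have htr : ∀ s : ℝ≥0∞, s < 1 → s.toReal < 1 := fun s hs => by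
    rw [← ENNReal.toReal_one]
    exact (ENNReal.toReal_lt_toReal (hs.trans_le le_top).ne (by simp)).2 hs
  have hnt : ∀ s : ℝ≥0∞, s < 1 → s ≠ ⊤ := fun s hs => (hs.trans_le le_top).ne
  have h12' : (r₁⁻¹).toReal + (r₂⁻¹).toReal = (r⁻¹).toReal := by
    rw [← h12, ENNReal.toReal_add (hnt _ hs1) (hnt _ hs2)]
  have h34' : (r₃⁻¹).toReal + (r₄⁻¹).toReal = (r⁻¹).toReal := by
    rw [← h34, ENNReal.toReal_add (hnt _ hs3) (hnt _ hs4)]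
  have hkR : (k : ℝ) ≠ 0 := by exact_mod_cast hk.ne'
  have hP0 : ∀ s t : ℝ≥0∞, s⁻¹ < 1 → PP k (s⁻¹).toReal (t⁻¹).toReal 0 = s := by
    intro s t hs
    unfold PP
    rw [Nat.cast_zero, zero_div, sub_zero, one_mul, zero_mul, add_zero,
      ENNReal.ofReal_toReal (hnt _ hs), inv_inv]
  have hPk : ∀ s t : ℝ≥0∞, t⁻¹ < 1 → PP k (s⁻¹).toReal (t⁻¹).toReal k = t := by
    intro s t ht
    unfold PP
    rw [div_self hkR, sub_self, one_mul, zero_mul, zero_add,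
      ENNReal.ofReal_toReal (hnt _ ht), inv_inv]
  obtain ⟨Cg, hCg1, hCg⟩ := PP_step k (r₁⁻¹).toReal (r₄⁻¹).toReal ENNReal.toReal_nonneg
    (htr _ hs1) ENNReal.toReal_nonneg (htr _ hs4)
  obtain ⟨Ch, hCh1, hCh⟩ := PP_step k (r₃⁻¹).toReal (r₂⁻¹).toReal ENNReal.toReal_nonneg
    (htr _ hs3) ENNReal.toReal_nonneg (htr _ hs2)
  set Pg := PP k (r₁⁻¹).toReal (r₄⁻¹).toReal with hPg
  set Ph := PP k (r₃⁻¹).toReal (r₂⁻¹).toReal with hPh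
  have hPsum : ∀ j ≤ k, (Pg j)⁻¹ + (Ph (k - j))⁻¹ = r⁻¹ := by
    intro j hj
    simp only [hPg, hPh, PP, inv_inv]
    rw [← ENNReal.ofReal_add
      (PP_val_bounds ENNReal.toReal_nonneg (htr _ hs1) ENNReal.toReal_nonneg (htr _ hs4) hj).1
      (PP_val_bounds ENNReal.toReal_nonneg (htr _ hs3) ENNReal.toReal_nonneg (htr _ hs2)
        (Nat.sub_le _ _)).1, ← ENNReal.ofReal_toReal (hnt _ hrinv)]
    congr 1
    rw [Nat.cast_sub hj, sub_div, div_self hkR]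
    linear_combination (1 - (j:ℝ) / k) * h12' + (j:ℝ) / k * h34'
  have hK1 : 1 ≤ Cg * Ch := one_le_mul hCg1 hCh1
  refine ⟨2 ^ k * (Cg * Ch) ^ (k ^ 2), by positivity, fun g h => ?_⟩
  let x : ℕ → ℝ≥0∞ := fun j => NN g j (Pg j) * NN h (k - j) (Ph (k - j))
  have hxmax := max_principle_const k (Cg * Ch) hK1 x
    (fun j _ => ENNReal.mul_ne_top (schwartz_fin _ _ _ _).ne (schwartz_fin _ _ _ _).ne) (by
      intro j hj
      obtain ⟨m, rfl⟩ : ∃ m, k = j + 2 + m := ⟨k - (j + 2), by omega⟩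
      have a1 := hCg g j hj
      have a2 := hCh h m (by omega)
      have e1 : j + 2 + m - j = m + 2 := by omega
      have e2 : j + 2 + m - (j + 1) = m + 1 := by omega
      have e3 : j + 2 + m - (j + 2) = m := by omega
      simp only [x, e1, e2, e3]
      rw [mul_pow]
      refine (mul_le_mul' a1 a2).trans (le_of_eq ?_)
      simp only [NN]
      push_cast
      ring)
  have hx0 : x 0 = eLpNorm (⇑g) r₁ volume * eLpNorm (iteratedFDeriv ℝ k ⇑h) r₂ volume := by
    simp only [x, Nat.sub_zero]
    rw [hPg, hPh, hP0 _ _ hs1, hPk _ _ hs2, NN, hz]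
    rfl
  have hxk : x k = eLpNorm (⇑h) r₃ volume * eLpNorm (iteratedFDeriv ℝ k ⇑g) r₄ volume := by
    simp only [x, Nat.sub_self]
    rw [hPg, hPh, hP0 _ _ hs3, hPk _ _ hs4, mul_comm, NN, hz]
    rfl
  calc _ ≤ _ := hleib g h
    _ ≤ ∑ j ∈ Finset.range (k + 1), (k.choose j : ℝ≥0∞) *
        (((Cg * Ch) ^ (k ^ 2) : ℝ≥0) * (x 0 + x k)) := by
        refine Finset.sum_le_sum fun j hj => mul_le_mul' le_rfl ?_
        have hj : j ≤ k := by simpa [Nat.lt_succ_iff] using hj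
        exact (holder_iter g h j (k - j) _ _ r (hPsum j hj)).trans (hxmax j hj)
    _ = 2 ^ k * (((Cg * Ch) ^ (k ^ 2) : ℝ≥0) * (x 0 + x k)) := by
        rw [← Finset.sum_mul]
        congr 1
        exact_mod_cast Nat.sum_range_choose k
    _ = _ := by
        rw [hx0, hxk]
        push_cast
        ring
end
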